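/- arXiv:2604.26101 — 5 statements merged into one kernel-verified Lean document; each statement's English description precedes it below -/
import Mathlib

section
/- For every integer d ≥ 3 and every integer k ≥ 2, there exist a finite vertex type V with exactly k·d elements and a d-regular digraph G on V such that the set C(G) of cycle-factors of G is nonempty and ∑_{σ ∈ C(G)} c(σ) > k·H_d·|C(G)| (as rational numbers); equivalently, the expected number of cycles of a uniformly random cycle-factor of G is strictly larger than k·H_d. -/
/-!
Take two copies of the complete digraph with loops on `d = m + 2` vertices, delete in each copy the
two arcs between two distinguished vertices, and join each distinguished vertex in both directions
to its twin in the other copy (`twoBlocks`). The result is `d`-regular on `2d` vertices, and its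
cycle-factors have on average strictly more than `2 H_d` cycles.

To see this, sort the cycle-factors by the arcs that cross between the blocks (`sum_split`). As many
arcs cross in one direction as in the other (`cross_balance`), so there are six classes: no crossing
arc, one arc in each direction (four choices of the two tails), or all four crossing arcs. Each
class is a fixed product of `0`, `1` or `2` transpositions times all pairs of permutations of the
blocks with prescribed behaviour at the distinguished vertices (`case_none`, `case_one`,
`case_two`). Each transposition merges two cycles (`cycleCount_swap_mul`). The sums over a single
block are obtained from the permutations of the `m` ordinary vertices by inserting the two
distinguished ones (`sum_two_points`), a uniform permutation of `m` points having `H_m` cycles on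
average (`sum_cycleCount`). Altogether (`twoBlocks_stat`) there are `m!² N` cycle-factors with
`N = m⁴ + 2m³ + 7m² + 6m + 4`, and they have `m!² (2 H_m N + 4m³ + 8m² + 16m + 12)` cycles, which
exceeds `2 H_{m+2} m!² N` by `m!² (6m⁴ + 8m³ + 10m² + 16m) / ((m + 1)(m + 2)) > 0`.

Each further complete block on `d` vertices raises the average by exactly `H_d`
(`addComplete_stat`), which gives the statement for all `k ≥ 2`.
-/


/-- The number of cycles of a permutation of a finite type, where fixed
points count as cycles of length one (i.e. the number of orbits of the
subgroup generated by the permutation). -/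
def cycleCount {V : Type*} [Fintype V] [DecidableEq V] (σ : Equiv.Perm V) : ℕ :=
  σ.cycleType.card + (Finset.univ.filter fun x => σ x = x).card

/-- The finite set of cycle-factors of a digraph `G` on `V`: permutations `σ`
with `G v (σ v)` for every vertex `v`. -/
def cycleFactors {V : Type*} [Fintype V] [DecidableEq V] (G : V → V → Prop) [DecidableRel G] :
    Finset (Equiv.Perm V) :=
  Finset.univ.filter fun σ => ∀ v, G v (σ v)

/-- A digraph is `d`-regular if every vertex has exactly `d` out-neighbours
and exactly `d` in-neighbours. -/
def IsRegularDigraph {V : Type*} [Fintype V] (G : V → V → Prop) [DecidableRel G] (d : ℕ) : Prop :=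
  ∀ v, (Finset.univ.filter fun w => G v w).card = d ∧
    (Finset.univ.filter fun w => G w v).card = d

/-- The harmonic number `H m = ∑_{j=1}^m 1/j`. -/
def harm (m : ℕ) : ℚ := ∑ j ∈ Finset.range m, (1 : ℚ) / (j + 1)


section

open Equiv Finset
open Equiv.Perm hiding cycleFactors

/-! ### Counting cycles as orbits -/

/-- A surjection `f` whose fibres are exactly the orbits of `σ` counts the cycles of `σ`. -/
lemma cycleCount_eq_card {V X : Type*} [Fintype V] [DecidableEq V] (σ : Perm V) (f : V → X)
    (hf : Function.Surjective f) (h : ∀ u v, σ.SameCycle u v ↔ f u = f v) :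
    cycleCount σ = Nat.card X := by
  classical
  let g : V → Perm V ⊕ V := fun x => if σ x = x then Sum.inr x else Sum.inl (σ.cycleOf x)
  have hg : ∀ u v, g u = g v ↔ f u = f v := by
    intro u v
    rw [← h]
    by_cases hu : σ u = u
    · by_cases hv : σ v = v
      · simp only [g, hu, hv, if_true, Sum.inr.injEq]
        constructor
        · rintro rfl
          exact SameCycle.refl _ _
        · rintro ⟨n, hn⟩
          rwa [zpow_apply_eq_self_of_apply_eq_self hu] at hn
      · simp only [g, hu, hv, if_true, if_false, reduceCtorEq, false_iff]
        exact fun hs => hv (hs.apply_eq_self_iff.1 hu)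
    · by_cases hv : σ v = v
      · simp only [g, hu, hv, if_true, if_false, reduceCtorEq, false_iff]
        exact fun hs => hu (hs.apply_eq_self_iff.2 hv)
      · simp only [g, hu, hv, if_false, Sum.inl.injEq]
        exact (sameCycle_iff_cycleOf_eq_of_mem_support
          (Perm.mem_support.2 hu) (Perm.mem_support.2 hv)).symm
  have himg : univ.image g = σ.cycleFactorsFinset.disjSum (univ.filter fun x => σ x = x) := by
    ext (c | x)
    · simp only [mem_image, mem_univ, true_and, inl_mem_disjSum, g]
      constructor
      · rintro ⟨x, hx⟩
        split_ifs at hx with hfx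
        rw [Sum.inl.injEq] at hx
        rw [← hx]
        exact cycleOf_mem_cycleFactorsFinset_iff.2 (Perm.mem_support.2 hfx)
      · intro hc
        obtain ⟨x, hx⟩ := (mem_cycleFactorsFinset_iff.1 hc).1.nonempty_support
        have hx' : σ x ≠ x := Perm.mem_support.1 (mem_cycleFactorsFinset_support_le hc hx)
        exact ⟨x, by rw [if_neg hx', cycle_is_cycleOf hx hc]⟩
    · simp only [mem_image, mem_univ, true_and, inr_mem_disjSum, mem_filter, g]
      constructor
      · rintro ⟨y, hy⟩
        split_ifs at hy with hfy
        rw [Sum.inr.injEq] at hy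
        rwa [← hy]
      · intro hx
        exact ⟨x, if_pos hx⟩
  have hcard : cycleCount σ = (univ.image g).card := by
    rw [himg, card_disjSum, cycleCount, cycleType_def, Multiset.card_map]
    rfl
  have hcard2 : (univ.image g).card = Nat.card X := by
    have : Nat.card (Set.range g) = Nat.card X := by
      refine (Nat.card_congr (Equiv.ofBijective
        (fun x : X => (⟨g (hf x).choose, Set.mem_range_self _⟩ : Set.range g)) ⟨?_, ?_⟩)).symm
      · intro x y hxy
        have := (hg _ _).1 (Subtype.ext_iff.1 hxy)
        rwa [(hf x).choose_spec, (hf y).choose_spec] at this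
      · rintro ⟨_, v, rfl⟩
        exact ⟨f v, Subtype.ext ((hg _ _).2 (hf (f v)).choose_spec)⟩
    rw [← this, ← Set.image_univ, ← coe_univ, ← coe_image, Nat.card_eq_card_toFinset, toFinset_coe]
  rw [hcard, hcard2]

/-- The set of orbits of `σ`. -/
abbrev Orb {V : Type*} (σ : Perm V) : Type _ := Quotient (SameCycle.setoid σ)

lemma orb_eq_iff {V : Type*} (σ : Perm V) (u v : V) :
    (Quotient.mk _ u : Orb σ) = Quotient.mk _ v ↔ σ.SameCycle u v :=
  Quotient.eq (r := SameCycle.setoid σ)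

lemma cycleCount_eq_orb {V : Type*} [Fintype V] [DecidableEq V] (σ : Perm V) :
    cycleCount σ = Nat.card (Orb σ) :=
  cycleCount_eq_card σ (fun v => (Quotient.mk _ v : Orb σ)) Quotient.mk_surjective
    fun u v => (orb_eq_iff σ u v).symm

/-- A function invariant under one step of `σ` is constant on orbits. -/
lemma eq_of_sameCycle {V X : Type*} (σ : Perm V) (f : V → X) (h : ∀ v, f (σ v) = f v) {u v : V}
    (huv : σ.SameCycle u v) : f u = f v := by
  obtain ⟨n, rfl⟩ := huv
  have key : ∀ (n : ℕ) (w : V), f ((σ ^ n) w) = f w := by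
    intro n
    induction n with
    | zero => simp
    | succ n ih => intro w; rw [pow_succ, Perm.mul_apply, ih, h]
  obtain ⟨n, rfl | rfl⟩ := n.eq_nat_or_neg
  · rw [zpow_natCast, key]
  · rw [← key n ((σ ^ (-(n : ℤ))) u)]
    simp

lemma cycleCount_sumCongr {V W : Type*} [Fintype V] [DecidableEq V] [Fintype W] [DecidableEq W]
    (α : Perm V) (β : Perm W) :
    cycleCount (Perm.sumCongr α β) = cycleCount α + cycleCount β := by
  rw [cycleCount_eq_orb α, cycleCount_eq_orb β, ← Nat.card_sum]
  have hz : ∀ n : ℤ, Perm.sumCongr α β ^ n = Perm.sumCongr (α ^ n) (β ^ n) := fun n => by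
    simpa using (map_zpow (sumCongrHom V W) (α, β) n).symm
  refine cycleCount_eq_card _ (Sum.map (Quotient.mk _) (Quotient.mk _))
    (Sum.map_surjective.2 ⟨Quotient.mk_surjective, Quotient.mk_surjective⟩) ?_
  rintro (u | u) (v | v)
  · simp only [Sum.map_inl, Sum.inl.injEq, orb_eq_iff]
    simp [SameCycle, hz]
  · simp [SameCycle, hz]
  · simp [SameCycle, hz]
  · simp only [Sum.map_inr, Sum.inr.injEq, orb_eq_iff]
    simp [SameCycle, hz]

lemma cycleCount_optionCongr {V : Type*} [Fintype V] [DecidableEq V] (τ : Perm V) :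
    cycleCount (optionCongr τ) = cycleCount τ + 1 := by
  rw [cycleCount_eq_orb τ, ← Finite.card_option]
  have hz : ∀ n : ℕ, (optionCongr τ : Perm (Option V)) ^ n = optionCongr (τ ^ n) := fun n => by
    induction n with
    | zero => simp
    | succ n ih =>
      rw [pow_succ, ih, pow_succ]
      ext1 x
      cases x <;> simp
  refine cycleCount_eq_card _ (Option.map (Quotient.mk _))
    ?_ ?_
  · rintro (_ | q)
    · exact ⟨none, rfl⟩
    · obtain ⟨v, rfl⟩ := Quotient.mk_surjective q
      exact ⟨some v, rfl⟩
  rintro (_ | u) (_ | v)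
  · exact iff_of_true (SameCycle.refl _ _) rfl
  · simp only [Option.map_none, Option.map_some, reduceCtorEq, iff_false]
    intro h
    obtain ⟨n, _, _, hn⟩ := h.exists_pow_eq
    simp [hz] at hn
  · simp only [Option.map_none, Option.map_some, reduceCtorEq, iff_false]
    intro h
    obtain ⟨n, _, _, hn⟩ := h.exists_pow_eq
    simp [hz] at hn
  · simp only [Option.map_some, Option.some.injEq, orb_eq_iff]
    constructor
    · intro h
      obtain ⟨n, _, _, hn⟩ := h.exists_pow_eq
      exact ⟨n, by simpa [hz] using hn⟩
    · intro h
      obtain ⟨n, _, _, hn⟩ := h.exists_pow_eq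
      exact ⟨n, by simp [hz, hn]⟩

/-- Composing with a transposition of two points in different cycles joins these two cycles. -/
lemma cycleCount_swap_mul {V : Type*} [Fintype V] [DecidableEq V] (σ : Perm V) (x y : V)
    (hxy : ¬ σ.SameCycle x y) : cycleCount (swap x y * σ) + 1 = cycleCount σ := by
  classical
  set σ' := swap x y * σ with hσ'
  have hne : x ≠ y := by
    rintro rfl
    exact hxy (SameCycle.refl _ _)
  have happ : ∀ v, σ' v = swap x y (σ v) := fun v => rfl
  -- Following `σ'` from `x` one runs through the `σ`-cycle of `x` and then jumps to `y`.
  have hjoin : σ'.SameCycle x y := by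
    have hex : ∃ n, 0 < n ∧ (σ ^ n) x = x := by
      refine ⟨orderOf σ, orderOf_pos σ, ?_⟩
      rw [pow_orderOf_eq_one]
      rfl
    set n := Nat.find hex with hn
    obtain ⟨hn0, hnx⟩ := Nat.find_spec hex
    have hlt : ∀ j < n, (σ' ^ j) x = (σ ^ j) x := by
      intro j
      induction j with
      | zero => simp
      | succ j ih =>
        intro hj
        rw [pow_succ', Perm.mul_apply, ih (by omega), happ, pow_succ' σ, Perm.mul_apply]
        apply swap_apply_of_ne_of_ne
        · intro h
          exact Nat.find_min hex hj ⟨by omega, by rw [pow_succ', Perm.mul_apply, h]⟩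
        · intro h
          exact hxy ⟨(j + 1 : ℕ), by rw [zpow_natCast, pow_succ', Perm.mul_apply, h]⟩
    refine ⟨n, ?_⟩
    obtain ⟨j, hj⟩ : ∃ j, n = j + 1 := ⟨n - 1, by omega⟩
    have hnx' : (σ ^ n) x = x := hnx
    rw [zpow_natCast]
    rw [hj, pow_succ', Perm.mul_apply] at hnx' ⊢
    rw [hlt j (by omega), happ, hnx', swap_apply_left]
  have hstep : ∀ v, σ'.SameCycle v (σ v) := by
    intro v
    have h1 : σ'.SameCycle v (σ' v) := ⟨1, by simp⟩
    rw [happ] at h1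
    by_cases hx : σ v = x
    · rw [hx, swap_apply_left] at h1
      rw [hx]
      exact h1.trans hjoin.symm
    · by_cases hy : σ v = y
      · rw [hy, swap_apply_right] at h1
        rw [hy]
        exact h1.trans hjoin
      · rwa [swap_apply_of_ne_of_ne hx hy] at h1
  have hle : ∀ {u v}, σ.SameCycle u v → σ'.SameCycle u v := by
    intro u v huv
    rw [← orb_eq_iff]
    exact eq_of_sameCycle σ (fun v => (Quotient.mk _ v : Orb σ'))
      (fun v => ((orb_eq_iff _ _ _).2 (hstep v)).symm) huv
  have hxy' : (Quotient.mk _ x : Orb σ) ≠ Quotient.mk _ y := fun h => hxy ((orb_eq_iff _ _ _).1 h)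
  -- The orbits of `σ'` are those of `σ` with the orbit of `y` identified with that of `x`.
  let f : V → {q : Orb σ // q ≠ Quotient.mk _ y} := fun v =>
    if h : (Quotient.mk _ v : Orb σ) = Quotient.mk _ y then ⟨Quotient.mk _ x, hxy'⟩
    else ⟨Quotient.mk _ v, h⟩
  have hσq : ∀ v, (Quotient.mk _ (σ v) : Orb σ) = Quotient.mk _ v := fun v =>
    (orb_eq_iff _ _ _).2 (SameCycle.symm ⟨1, by simp⟩)
  have hfval : ∀ v, (f v : Orb σ) = if (Quotient.mk _ v : Orb σ) = Quotient.mk _ y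
      then Quotient.mk _ x else Quotient.mk _ v := by
    intro v
    simp only [f]
    split_ifs <;> rfl
  have hfx : f x = f y := by
    apply Subtype.ext
    rw [hfval, hfval, if_pos rfl, if_neg hxy']
  have hfσ : ∀ v, f (σ v) = f v := by
    intro v
    apply Subtype.ext
    rw [hfval, hfval, hσq]
  have hfσ' : ∀ v, f (σ' v) = f v := by
    intro v
    rw [happ, ← hfσ v]
    by_cases hx : σ v = x
    · rw [hx, swap_apply_left, hfx]
    · by_cases hy : σ v = y
      · rw [hy, swap_apply_right, hfx]
      · rw [swap_apply_of_ne_of_ne hx hy]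
  have hback : ∀ v (w : V), (f v : Orb σ) = Quotient.mk _ w → σ'.SameCycle v w := by
    intro v w h
    rw [hfval] at h
    split_ifs at h with hv
    · exact ((hle ((orb_eq_iff _ _ _).1 hv)).trans hjoin.symm).trans
        (hle ((orb_eq_iff _ _ _).1 h))
    · exact hle ((orb_eq_iff _ _ _).1 h)
  have hcount : cycleCount σ' = Nat.card {q : Orb σ // q ≠ Quotient.mk _ y} := by
    refine cycleCount_eq_card σ' f ?_ ?_
    · rintro ⟨q, hq⟩
      obtain ⟨v, rfl⟩ := Quotient.mk_surjective q
      exact ⟨v, Subtype.ext (by rw [hfval, if_neg hq])⟩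
    · intro u v
      refine ⟨fun h => eq_of_sameCycle σ' f hfσ' h, fun h => ?_⟩
      obtain ⟨w, hw⟩ := Quotient.mk_surjective (f u : Orb σ)
      exact (hback u w hw.symm).trans (hback v w (by rw [← h, hw])).symm
  have hfin : Fintype (Orb σ) := Fintype.ofFinite _
  rw [hcount, cycleCount_eq_orb, Nat.card_eq_fintype_card, Nat.card_eq_fintype_card,
    Fintype.card_subtype_compl, Fintype.card_subtype_eq]
  have : 0 < Fintype.card (Orb σ) := Fintype.card_pos_iff.2 ⟨Quotient.mk _ x⟩
  omega

lemma cycleCount_decomposeOption_symm {V : Type*} [Fintype V] [DecidableEq V]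
    (i : Option V) (τ : Perm V) :
    cycleCount (swap none i * optionCongr τ) = cycleCount τ + if i = none then 1 else 0 := by
  rcases i with _ | i
  · simp [cycleCount_optionCongr, ← Perm.one_def]
  · have h : ¬ SameCycle (optionCongr τ) none (some i) := by
      intro h
      have := eq_of_sameCycle (optionCongr τ) Option.isSome (by rintro (_ | v) <;> simp) h
      simp at this
    have := cycleCount_swap_mul (optionCongr τ) none (some i) h
    rw [cycleCount_optionCongr] at this
    simpa using this

/-! ### Sums over permutations by inserting one point at a time -/

lemma sum_perm_option {V : Type*} [Fintype V] [DecidableEq V] (F : Perm (Option V) → ℚ) :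
    ∑ σ, F σ = ∑ τ : Perm V, ∑ i : Option V, F (swap none i * optionCongr τ) := by
  rw [← Equiv.sum_comp (decomposeOption (α := V)).symm, Fintype.sum_prod_type, Finset.sum_comm]
  rfl

lemma cycleCount_permCongr {V W : Type*} [Fintype V] [DecidableEq V] [Fintype W] [DecidableEq W]
    (e : V ≃ W) (σ : Perm V) : cycleCount (e.permCongr σ) = cycleCount σ := by
  rw [cycleCount_eq_orb σ]
  refine cycleCount_eq_card _ (fun w => Quotient.mk _ (e.symm w))
    (Quotient.mk_surjective.comp e.symm.surjective) ?_
  intro u v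
  have hz : ∀ n : ℤ, e.permCongr σ ^ n = e.permCongr (σ ^ n) := fun n =>
    (map_zpow e.permCongrHom σ n).symm
  rw [orb_eq_iff]
  simp [SameCycle, hz, Equiv.permCongr_apply, Equiv.eq_symm_apply]

lemma harm_succ (n : ℕ) : harm (n + 1) = harm n + 1 / (n + 1) := by
  rw [harm, Finset.sum_range_succ, harm]

/-- The expected number of cycles of a uniformly random permutation of `n` points is `H_n`. -/
lemma sum_cycleCount (V : Type*) [Fintype V] [DecidableEq V] :
    ∑ σ : Perm V, (cycleCount σ : ℚ) =
      (Fintype.card V).factorial * harm (Fintype.card V) := by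
  have key := Fintype.induction_empty_option
    (P := fun V _ => ∀ [DecidableEq V], ∑ σ : Perm V, (cycleCount σ : ℚ) =
      (Fintype.card V).factorial * harm (Fintype.card V)) ?_ ?_ ?_ V
  · exact key
  · intro α β _ e ih _
    classical
    let : Fintype α := Fintype.ofEquiv β e.symm
    rw [← Equiv.sum_comp e.permCongr, ← Fintype.card_congr e]
    simp only [cycleCount_permCongr]
    exact ih
  · intro _
    simp [harm, cycleCount]
  · intro α _ ih _
    classical
    have hd : ‹DecidableEq (Option α)› = Option.instDecidableEq := Subsingleton.elim _ _
    subst hd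
    rw [sum_perm_option]
    simp only [cycleCount_decomposeOption_symm, Fintype.sum_option, Fintype.card_option,
      harm_succ, Nat.factorial_succ]
    simp [Finset.sum_add_distrib, ← Finset.mul_sum, ih, Fintype.card_perm]
    field_simp
    ring

/-- The number of permutations of a set with two extra points `none`, `some none` whose images of
these points satisfy `P`, and their total number of cycles. Such a permutation arises from one of
`W` by inserting first `some none` (with image `j`) and then `none` (with image `i`); an inserted
point adds a cycle exactly when it is inserted as a fixed point. So every permutation of `W`
extends in `N` ways, and these extensions have `E` additional cycles altogether. -/
lemma sum_two_points {W : Type*} [Fintype W] [DecidableEq W]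
    (P : Option (Option W) → Option (Option W) → Prop) [∀ x y, Decidable (P x y)] (N E : ℚ)
    (hN : ∑ j : Option W, ∑ i : Option (Option W),
      (if P i (if i = some j then none else some j) then (1 : ℚ) else 0) = N)
    (hE : ∑ j : Option W, ∑ i : Option (Option W),
      (if P i (if i = some j then none else some j) then
        (if j = none then (1 : ℚ) else 0) + (if i = none then 1 else 0) else 0) = E) :
    ((univ.filter fun σ : Perm (Option (Option W)) => P (σ none) (σ (some none))).card : ℚ) =
        (Fintype.card W).factorial * N ∧
    ∑ σ ∈ univ.filter fun σ : Perm (Option (Option W)) => P (σ none) (σ (some none)),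
      (cycleCount σ : ℚ) = (Fintype.card W).factorial * (N * harm (Fintype.card W) + E) := by
  have h1 : ∀ (i : Option (Option W)) (τ : Perm (Option W)),
      (swap none i * optionCongr τ : Perm (Option (Option W))) none = i := by
    intro i τ
    simp
  have h2 : ∀ (i : Option (Option W)) (j : Option W) (τ : Perm W),
      (swap none i * optionCongr (swap none j * optionCongr τ) : Perm (Option (Option W)))
        (some none) = if i = some j then none else some j := by
    intro i j τ
    simp [swap_apply_def, eq_comm]
  constructor
  · rw [Finset.card_filter, Nat.cast_sum]
    rw [sum_perm_option, sum_perm_option]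
    simp only [h1, h2, Nat.cast_ite, Nat.cast_one, Nat.cast_zero, hN]
    simp [Fintype.card_perm]
  · rw [Finset.sum_filter, sum_perm_option, sum_perm_option]
    simp only [h1, h2, cycleCount_decomposeOption_symm]
    have h3 : ∀ τ : Perm W, ∑ j : Option W, ∑ i : Option (Option W),
        (if P i (if i = some j then none else some j) then
          ((cycleCount τ + (if j = none then 1 else 0) + (if i = none then 1 else 0) : ℕ) : ℚ)
          else 0) = cycleCount τ * N + E := by
      intro τ
      rw [← hN, ← hE, Finset.mul_sum, ← Finset.sum_add_distrib]
      refine Finset.sum_congr rfl fun j _ => ?_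
      rw [Finset.mul_sum, ← Finset.sum_add_distrib]
      refine Finset.sum_congr rfl fun i _ => ?_
      push_cast
      split_ifs <;> ring
    simp only [h3, Finset.sum_add_distrib, ← Finset.sum_mul, sum_cycleCount]
    simp [Fintype.card_perm]
    ring

/-! ### Permutations of a disjoint union -/

lemma not_sameCycle_sumCongr {V W : Type*} (α : Perm V) (β : Perm W) (x : V) (y : W) :
    ¬ (Perm.sumCongr α β).SameCycle (Sum.inl x) (Sum.inr y) := by
  intro h
  have := eq_of_sameCycle (Perm.sumCongr α β) Sum.isLeft (by rintro (v | v) <;> simp) h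
  simp at this

/-- A set `E` of permutations of `V ⊕ W` that is `π` times a product set `S × T` of
block-preserving permutations, with the number of cycles shifted by a constant `e`. -/
lemma sum_of_product {V W : Type*} [Fintype V] [DecidableEq V] [Fintype W] [DecidableEq W]
    (π : Perm (V ⊕ W)) (E : Finset (Perm (V ⊕ W))) (S : Finset (Perm V)) (T : Finset (Perm W))
    (e : ℚ)
    (hE : ∀ σ ∈ E, ∀ v, ((π⁻¹ * σ) (Sum.inl v)).isLeft = true)
    (hmem : ∀ α β, π * Perm.sumCongr α β ∈ E ↔ α ∈ S ∧ β ∈ T)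
    (hc : ∀ α ∈ S, ∀ β ∈ T, (cycleCount (π * Perm.sumCongr α β) : ℚ) =
      cycleCount α + cycleCount β + e) :
    (E.card : ℚ) = S.card * T.card ∧
    ∑ σ ∈ E, (cycleCount σ : ℚ) = T.card * (∑ α ∈ S, (cycleCount α : ℚ)) +
      S.card * (∑ β ∈ T, (cycleCount β : ℚ)) + e * (S.card * T.card) := by
  have hinj : Function.Injective fun p : Perm V × Perm W => π * Perm.sumCongr p.1 p.2 := by
    intro p q h
    exact sumCongrHom_injective (mul_left_cancel h)
  have himg : E = (S ×ˢ T).image fun p => π * Perm.sumCongr p.1 p.2 := by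
    ext σ
    simp only [mem_image, mem_product]
    constructor
    · intro hσ
      obtain ⟨⟨α, β⟩, hαβ⟩ := mem_sumCongrHom_range_of_perm_mapsTo_inl (σ := π⁻¹ * σ) (by
        rintro _ ⟨v, rfl⟩
        obtain ⟨w, hw⟩ := Sum.isLeft_iff.1 (hE σ hσ v)
        exact ⟨w, hw.symm⟩)
      have hσ' : π * Perm.sumCongr α β = σ := by
        rw [eq_inv_mul_iff_mul_eq] at hαβ
        exact hαβ
      refine ⟨(α, β), ?_, hσ'⟩
      rw [← hσ'] at hσ
      exact (hmem α β).1 hσ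
    · rintro ⟨⟨α, β⟩, h, rfl⟩
      exact (hmem α β).2 h
  constructor
  · rw [himg, card_image_of_injective _ hinj, card_product, Nat.cast_mul]
  · rw [himg, sum_image hinj.injOn, sum_product]
    have : ∀ α ∈ S, ∑ β ∈ T, (cycleCount (π * Perm.sumCongr α β) : ℚ) =
        T.card * cycleCount α + ∑ β ∈ T, (cycleCount β : ℚ) + e * T.card := by
      intro α hα
      rw [sum_congr rfl (hc α hα)]
      simp only [sum_add_distrib, sum_const, nsmul_eq_mul]
      ring
    rw [sum_congr rfl this]
    simp only [sum_add_distrib, sum_const, nsmul_eq_mul, ← mul_sum]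
    ring

/-! ### The digraph on two blocks -/

/-- `x` and `y` are the two distinguished vertices `none` and `some none` of a block, in either
order. -/
def Special {W : Type*} (x y : Option (Option W)) : Prop :=
  (x = none ∧ y = some none) ∨ (x = some none ∧ y = none)

/-- Two complete blocks `Option (Option W)`, in which the two arcs between the distinguished
vertices `none` and `some none` are deleted from each block, and each distinguished vertex is
joined in both directions to its twin in the other block. -/
def twoBlocks (W : Type*) : Option (Option W) ⊕ Option (Option W) →
    Option (Option W) ⊕ Option (Option W) → Prop
  | Sum.inl x, Sum.inl y => ¬ Special x y
  | Sum.inr x, Sum.inr y => ¬ Special x y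
  | Sum.inl x, Sum.inr y => x = y ∧ (x = none ∨ x = some none)
  | Sum.inr x, Sum.inl y => x = y ∧ (x = none ∨ x = some none)

lemma twoBlocks_regular (W : Type*) [Fintype W] [DecidableEq W]
    [DecidableRel (twoBlocks W)] :
    IsRegularDigraph (twoBlocks W) (Fintype.card W + 2) := by
  intro v
  rw [Finset.card_filter, Finset.card_filter]
  rcases v with (_ | _ | w) | (_ | _ | w) <;>
    simp [Fintype.sum_sum_type, Fintype.sum_option, twoBlocks, Special] <;> omega

/-- A permutation of a disjoint union crosses equally often in either direction. -/
lemma card_cross {V W : Type*} [Fintype V] [Fintype W] (σ : Perm (V ⊕ W)) :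
    (univ.filter fun v : V => (σ (Sum.inl v)).isRight = true).card =
      (univ.filter fun w : W => (σ (Sum.inr w)).isLeft = true).card := by
  have h : ∑ u, (if (σ u).isLeft then 1 else 0) = ∑ u : V ⊕ W, (if u.isLeft then 1 else 0) :=
    Equiv.sum_comp σ fun u => if u.isLeft then 1 else 0
  rw [Fintype.sum_sum_type, Fintype.sum_sum_type] at h
  have h2 : ∑ v : V, (if (σ (Sum.inl v)).isLeft then 1 else 0) +
      ∑ v : V, (if (σ (Sum.inl v)).isRight then 1 else 0) = ∑ v : V, 1 := by
    rw [← sum_add_distrib]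
    refine sum_congr rfl fun v _ => ?_
    cases σ (Sum.inl v) <;> simp
  rw [card_filter, card_filter]
  simp only [Sum.isLeft_inl, Sum.isLeft_inr, if_true, sum_const_zero, Bool.false_eq_true,
    if_false] at h
  omega

lemma mem_cycleFactors {V : Type*} [Fintype V] [DecidableEq V] (G : V → V → Prop)
    [DecidableRel G] (σ : Perm V) : σ ∈ cycleFactors G ↔ ∀ v, G v (σ v) := by
  simp [cycleFactors]

/-- For a cycle-factor of `twoBlocks W`, the numbers of crossing arcs in the two directions,
each of which starts at a distinguished vertex and ends at its twin, agree. -/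
lemma cross_balance {W : Type*} [Fintype W] [DecidableEq W]
    (σ : Perm (Option (Option W) ⊕ Option (Option W))) (hσ : ∀ v, twoBlocks W v (σ v)) :
    (if σ (Sum.inl none) = Sum.inr none then 1 else 0) +
      (if σ (Sum.inl (some none)) = Sum.inr (some none) then 1 else 0) =
    (if σ (Sum.inr none) = Sum.inl none then 1 else 0) +
      (if σ (Sum.inr (some none)) = Sum.inl (some none) then 1 else 0) := by
  have h := card_cross σ
  rw [card_filter, card_filter] at h
  simp only [Fintype.sum_option] at h
  have hl : ∀ x, ((σ (Sum.inl x)).isRight = true) ↔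
      (σ (Sum.inl x) = Sum.inr x ∧ (x = none ∨ x = some none)) := by
    intro x
    have := hσ (Sum.inl x)
    rcases hx : σ (Sum.inl x) with y | y
    · simp
    · rw [hx] at this
      obtain ⟨h1, h2⟩ := this
      simp [h1.symm, h2]
  have hr : ∀ x, ((σ (Sum.inr x)).isLeft = true) ↔
      (σ (Sum.inr x) = Sum.inl x ∧ (x = none ∨ x = some none)) := by
    intro x
    have := hσ (Sum.inr x)
    rcases hx : σ (Sum.inr x) with y | y
    · rw [hx] at this
      obtain ⟨h1, h2⟩ := this
      simp [h1.symm, h2]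
    · simp
  simp only [hl, hr] at h
  simpa using h

/-- The permutations of a block that send `y` to `x` and, if `x ≠ y`, do not send `x` to `y`. -/
def oneArc {W : Type*} [Fintype W] [DecidableEq W] (x y : Option (Option W)) :
    Finset (Perm (Option (Option W))) :=
  univ.filter fun α => α y = x ∧ (x = y ∨ α x ≠ y)

/-- The permutations of a block that use no arc between the distinguished vertices. -/
def noArc (W : Type*) [Fintype W] [DecidableEq W] : Finset (Perm (Option (Option W))) :=
  univ.filter fun α => α none ≠ some none ∧ α (some none) ≠ none

/-- The permutations of a block that fix both distinguished vertices. -/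
def twoFixed (W : Type*) [Fintype W] [DecidableEq W] : Finset (Perm (Option (Option W))) :=
  univ.filter fun α => α none = none ∧ α (some none) = some none

/-- The involution of the vertices of `twoBlocks W` that exchanges each distinguished vertex with
its twin. -/
def twinSwap (W : Type*) [DecidableEq W] : Perm (Option (Option W) ⊕ Option (Option W)) :=
  swap (Sum.inl none) (Sum.inr none) * swap (Sum.inl (some none)) (Sum.inr (some none))

lemma twinSwap_apply {W : Type*} [DecidableEq W] (v : Option (Option W) ⊕ Option (Option W)) :
    twinSwap W v = if v = Sum.inl none then Sum.inr none else if v = Sum.inr none then Sum.inl none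
      else if v = Sum.inl (some none) then Sum.inr (some none)
      else if v = Sum.inr (some none) then Sum.inl (some none) else v := by
  rw [twinSwap, Perm.mul_apply]
  simp only [swap_apply_def]
  grind

lemma twinSwap_inv (W : Type*) [DecidableEq W] : (twinSwap W)⁻¹ = twinSwap W := by
  rw [inv_eq_iff_mul_eq_one]
  ext1 v
  rw [Perm.mul_apply, twinSwap_apply, twinSwap_apply]
  rcases v with (_ | _ | v) | (_ | _ | v) <;> simp

section cases

variable {W : Type*} [Fintype W] [DecidableEq W] [DecidableRel (twoBlocks W)]

/-- Cycle-factors without crossing arcs. -/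
lemma case_none {E : Finset (Perm (Option (Option W) ⊕ Option (Option W)))}
    (hE : E = (cycleFactors (twoBlocks W)).filter fun σ =>
      σ (Sum.inl none) ≠ Sum.inr none ∧ σ (Sum.inl (some none)) ≠ Sum.inr (some none)) :
    (E.card : ℚ) = (noArc W).card * (noArc W).card ∧
    ∑ σ ∈ E, (cycleCount σ : ℚ) = (noArc W).card * (∑ α ∈ noArc W, (cycleCount α : ℚ)) +
      (noArc W).card * (∑ β ∈ noArc W, (cycleCount β : ℚ)) +
      0 * ((noArc W).card * (noArc W).card) := by
  refine sum_of_product 1 E _ _ 0 ?_ ?_ ?_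
  · intro σ hσ v
    simp only [hE, mem_filter, mem_cycleFactors] at hσ
    obtain ⟨h, h1, h2⟩ := hσ
    have hv := h (Sum.inl v)
    rcases hx : σ (Sum.inl v) with y | y
    · simp [hx]
    · rw [hx] at hv
      obtain ⟨rfl, rfl | rfl⟩ := hv
      · exact absurd hx h1
      · exact absurd hx h2
  · intro α β
    simp only [hE, noArc, mem_filter, mem_cycleFactors, mem_univ, true_and, Sum.forall,
      Option.forall]
    simp [twoBlocks, Special]
  · intro α _ β _
    simp [cycleCount_sumCongr]

/-- Cycle-factors with exactly one crossing arc in each direction, from `y` on the left and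
from `x` on the right. Redirecting these two arcs by a transposition gives a block-preserving
permutation with one more cycle. -/
lemma case_one {E : Finset (Perm (Option (Option W) ⊕ Option (Option W)))}
    (x y : Option (Option W)) (hx : x = none ∨ x = some none) (hy : y = none ∨ y = some none)
    (hE : E = (cycleFactors (twoBlocks W)).filter fun σ =>
      σ (Sum.inl y) = Sum.inr y ∧ σ (Sum.inr x) = Sum.inl x ∧
        ∀ z, (z = none ∨ z = some none) → σ (Sum.inl z) = Sum.inr z → z = y) :
    (E.card : ℚ) = (oneArc x y).card * (oneArc y x).card ∧
    ∑ σ ∈ E, (cycleCount σ : ℚ) = (oneArc y x).card * (∑ α ∈ oneArc x y, (cycleCount α : ℚ)) +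
      (oneArc x y).card * (∑ β ∈ oneArc y x, (cycleCount β : ℚ)) +
      (-1) * ((oneArc x y).card * (oneArc y x).card) := by
  refine sum_of_product (swap (Sum.inl x) (Sum.inr y)) E _ _ (-1) ?_ ?_ ?_
  · intro σ hσ v
    simp only [hE, mem_filter, mem_cycleFactors] at hσ
    obtain ⟨h, h1, h2, h3⟩ := hσ
    have hv := h (Sum.inl v)
    rw [Perm.mul_apply, swap_inv, swap_apply_def]
    have hne : σ (Sum.inl v) ≠ Sum.inl x := by
      rw [← h2]
      exact σ.injective.ne (by simp)
    rcases hw : σ (Sum.inl v) with t | t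
    · rw [hw] at hne
      simp [hne]
    · rw [hw] at hv
      obtain ⟨rfl, hv⟩ := hv
      simp [h3 v hv hw]
  · intro α β
    simp only [hE, oneArc, mem_filter, mem_cycleFactors, mem_univ, true_and]
    have hα := α.injective
    have hβ := β.injective
    constructor
    · rintro ⟨h, h1, h2, -⟩
      have e1 : α y = x := by
        simp only [Perm.mul_apply, Perm.sumCongr_apply, Sum.map_inl, swap_apply_def] at h1
        split_ifs at h1 with h3
        exact Sum.inl_injective h3
      have e2 : β x = y := by
        simp only [Perm.mul_apply, Perm.sumCongr_apply, Sum.map_inr, swap_apply_def] at h2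
        simp only [reduceCtorEq, if_false] at h2
        split_ifs at h2 with h3
        exact Sum.inr_injective h3
      refine ⟨⟨e1, ?_⟩, e2, ?_⟩
      · by_contra! hc
        have := h (Sum.inl x)
        have hn : (Sum.inl y : Option (Option W) ⊕ Option (Option W)) ≠ Sum.inl x :=
          fun h => hc.1 (Sum.inl_injective h).symm
        simp only [Perm.mul_apply, Perm.sumCongr_apply, Sum.map_inl, hc.2, swap_apply_def, hn,
          if_false, reduceCtorEq] at this
        rcases hx with rfl | rfl <;> rcases hy with rfl | rfl <;> simp_all [twoBlocks, Special]
      · by_contra! hc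
        have := h (Sum.inr y)
        have hn : (Sum.inr x : Option (Option W) ⊕ Option (Option W)) ≠ Sum.inr y :=
          fun h => hc.1 (Sum.inr_injective h).symm
        simp only [Perm.mul_apply, Perm.sumCongr_apply, Sum.map_inr, hc.2, swap_apply_def, hn,
          if_false, reduceCtorEq] at this
        rcases hx with rfl | rfl <;> rcases hy with rfl | rfl <;> simp_all [twoBlocks, Special]
    · rintro ⟨⟨e1, f1⟩, e2, f2⟩
      have hl : ∀ z, z ≠ y → (swap (Sum.inl x) (Sum.inr y) * Perm.sumCongr α β) (Sum.inl z) =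
          Sum.inl (α z) := by
        intro z hz
        have : α z ≠ x := by
          rw [← e1]
          exact hα.ne hz
        simp [swap_apply_def, this]
      have hr : ∀ z, z ≠ x → (swap (Sum.inl x) (Sum.inr y) * Perm.sumCongr α β) (Sum.inr z) =
          Sum.inr (β z) := by
        intro z hz
        have : β z ≠ y := by
          rw [← e2]
          exact hβ.ne hz
        simp [swap_apply_def, this]
      have hly : (swap (Sum.inl x) (Sum.inr y) * Perm.sumCongr α β) (Sum.inl y) = Sum.inr y := by
        simp [e1]
      have hrx : (swap (Sum.inl x) (Sum.inr y) * Perm.sumCongr α β) (Sum.inr x) = Sum.inl x := by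
        simp [e2]
      refine ⟨?_, hly, hrx, ?_⟩
      · rintro (z | z)
        · by_cases hz : z = y
          · rw [hz, hly]
            exact ⟨rfl, hy⟩
          · rw [hl z hz]
            have : α z ≠ x := by
              rw [← e1]
              exact hα.ne hz
            change ¬ Special _ _
            rintro (⟨h1, h2⟩ | ⟨h1, h2⟩) <;> grind
        · by_cases hz : z = x
          · rw [hz, hrx]
            exact ⟨rfl, hx⟩
          · rw [hr z hz]
            have : β z ≠ y := by
              rw [← e2]
              exact hβ.ne hz
            change ¬ Special _ _
            rintro (⟨h1, h2⟩ | ⟨h1, h2⟩) <;> grind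
      · intro z _ h
        by_contra hz
        rw [hl z hz] at h
        exact absurd h (by simp)
  · intro α _ β _
    have h := cycleCount_swap_mul _ _ _ (not_sameCycle_sumCongr α β x y)
    rw [cycleCount_sumCongr] at h
    have h' : (cycleCount (swap (Sum.inl x) (Sum.inr y) * Perm.sumCongr α β) : ℚ) + 1 =
        cycleCount α + cycleCount β := by exact_mod_cast h
    linarith

/-- Cycle-factors with all four crossing arcs. Composing with `twinSwap W` gives a
block-preserving permutation that fixes the distinguished vertices and has two more cycles. -/
lemma case_two {E : Finset (Perm (Option (Option W) ⊕ Option (Option W)))}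
    (hE : E = (cycleFactors (twoBlocks W)).filter fun σ =>
      σ (Sum.inl none) = Sum.inr none ∧ σ (Sum.inl (some none)) = Sum.inr (some none)) :
    (E.card : ℚ) = (twoFixed W).card * (twoFixed W).card ∧
    ∑ σ ∈ E, (cycleCount σ : ℚ) = (twoFixed W).card * (∑ α ∈ twoFixed W, (cycleCount α : ℚ)) +
      (twoFixed W).card * (∑ β ∈ twoFixed W, (cycleCount β : ℚ)) +
      (-2) * ((twoFixed W).card * (twoFixed W).card) := by
  refine sum_of_product (twinSwap W) E _ _ (-2) ?_ ?_ ?_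
  · intro σ hσ v
    simp only [hE, mem_filter, mem_cycleFactors] at hσ
    obtain ⟨h, h1, h2⟩ := hσ
    have hb := cross_balance σ h
    simp only [h1, h2, if_true] at hb
    have h3 : σ (Sum.inr none) = Sum.inl none := by
      by_contra h3
      rw [if_neg h3] at hb
      split_ifs at hb <;> omega
    have h4 : σ (Sum.inr (some none)) = Sum.inl (some none) := by
      by_contra h4
      rw [if_neg h4] at hb
      split_ifs at hb
      omega
    have hv := h (Sum.inl v)
    have hne : σ (Sum.inl v) ≠ Sum.inl none := by
      rw [← h3]
      exact σ.injective.ne (by simp)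
    have hne' : σ (Sum.inl v) ≠ Sum.inl (some none) := by
      rw [← h4]
      exact σ.injective.ne (by simp)
    rw [twinSwap_inv, Perm.mul_apply, twinSwap_apply]
    rcases hw : σ (Sum.inl v) with t | t
    · rw [hw] at hne hne'
      simp [hne, hne']
    · rw [hw] at hv
      obtain ⟨rfl, rfl | rfl⟩ := hv <;> simp
  · intro α β
    simp only [hE, twoFixed, mem_filter, mem_cycleFactors, mem_univ, true_and]
    have hα := α.injective
    have hβ := β.injective
    have hl : ∀ z, (twinSwap W * Perm.sumCongr α β) (Sum.inl z) = twinSwap W (Sum.inl (α z)) :=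
      fun z => rfl
    have hr : ∀ z, (twinSwap W * Perm.sumCongr α β) (Sum.inr z) = twinSwap W (Sum.inr (β z)) :=
      fun z => rfl
    have t1 : twinSwap W (Sum.inl none) = Sum.inr none := by simp [twinSwap_apply]
    have t2 : twinSwap W (Sum.inl (some none)) = Sum.inr (some none) := by simp [twinSwap_apply]
    have t3 : twinSwap W (Sum.inr none) = Sum.inl none := by simp [twinSwap_apply]
    have t4 : twinSwap W (Sum.inr (some none)) = Sum.inl (some none) := by simp [twinSwap_apply]
    constructor
    · rintro ⟨h, h1, h2⟩
      have hb := cross_balance _ h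
      rw [if_pos h1, if_pos h2] at hb
      have h3 : (twinSwap W * Perm.sumCongr α β) (Sum.inr none) = Sum.inl none := by
        by_contra h3
        rw [if_neg h3] at hb
        split_ifs at hb <;> omega
      have h4 : (twinSwap W * Perm.sumCongr α β) (Sum.inr (some none)) = Sum.inl (some none) := by
        by_contra h4
        rw [if_neg h4] at hb
        split_ifs at hb
        omega
      rw [hl, ← t1] at h1
      rw [hl, ← t2] at h2
      rw [hr, ← t3] at h3
      rw [hr, ← t4] at h4
      exact ⟨⟨Sum.inl_injective ((twinSwap W).injective h1),
        Sum.inl_injective ((twinSwap W).injective h2)⟩,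
        Sum.inr_injective ((twinSwap W).injective h3),
        Sum.inr_injective ((twinSwap W).injective h4)⟩
    · rintro ⟨⟨h1, h2⟩, h3, h4⟩
      refine ⟨?_, by rw [hl, h1, t1], by rw [hl, h2, t2]⟩
      rintro ((_ | _ | w) | (_ | _ | w))
      · rw [hl, h1, t1]
        exact ⟨rfl, Or.inl rfl⟩
      · rw [hl, h2, t2]
        exact ⟨rfl, Or.inr rfl⟩
      · have e1 : α (some (some w)) ≠ none := h1 ▸ hα.ne (by simp)
        have e2 : α (some (some w)) ≠ some none := h2 ▸ hα.ne (by simp)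
        rw [hl, twinSwap_apply]
        simp [e1, e2, twoBlocks, Special]
      · rw [hr, h3, t3]
        exact ⟨rfl, Or.inl rfl⟩
      · rw [hr, h4, t4]
        exact ⟨rfl, Or.inr rfl⟩
      · have e1 : β (some (some w)) ≠ none := h3 ▸ hβ.ne (by simp)
        have e2 : β (some (some w)) ≠ some none := h4 ▸ hβ.ne (by simp)
        rw [hr, twinSwap_apply]
        simp [e1, e2, twoBlocks, Special]
  · intro α hα β hβ
    simp only [twoFixed, mem_filter, mem_univ, true_and] at hα hβ
    have h := cycleCount_swap_mul _ _ _ (not_sameCycle_sumCongr α β (some none) (some none))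
    rw [cycleCount_sumCongr] at h
    have h2 := cycleCount_swap_mul
      (swap (Sum.inl (some none)) (Sum.inr (some none)) * Perm.sumCongr α β)
      (Sum.inl none) (Sum.inr none) (by
        rintro ⟨n, hn⟩
        rw [zpow_apply_eq_self_of_apply_eq_self (by simp [hα.1, swap_apply_def])] at hn
        simp at hn)
    rw [← mul_assoc] at h2
    have h' : (cycleCount (swap (Sum.inl (some none)) (Sum.inr (some none)) *
      Perm.sumCongr α β) : ℚ) + 1 = cycleCount α + cycleCount β := by exact_mod_cast h
    have h2' : (cycleCount (twinSwap W * Perm.sumCongr α β) : ℚ) + 1 =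
      cycleCount (swap (Sum.inl (some none)) (Sum.inr (some none)) *
      Perm.sumCongr α β) := by exact_mod_cast h2
    linarith

end cases

/-! ### Evaluation of the sums -/

lemma stat_noArc (W : Type*) [Fintype W] [DecidableEq W] :
    ((noArc W).card : ℚ) =
        (Fintype.card W).factorial * ((Fintype.card W : ℚ) ^ 2 + Fintype.card W + 1) ∧
    ∑ σ ∈ noArc W, (cycleCount σ : ℚ) = (Fintype.card W).factorial *
      (((Fintype.card W : ℚ) ^ 2 + Fintype.card W + 1) * harm (Fintype.card W) +
        (2 * Fintype.card W + 2)) := by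
  refine sum_two_points (fun p q => p ≠ some none ∧ q ≠ none) _ _ ?_ ?_
  · have h : ∀ x : W, ∑ y : W, (if y = x then (0 : ℚ) else 1) = Fintype.card W - 1 := by
      intro x
      have h' : ∀ y : W, (if y = x then (0 : ℚ) else 1) = 1 - if y = x then 1 else 0 := by
        intro y
        split_ifs <;> simp
      simp [h']
    simp [Fintype.sum_option, ite_and, h]
    ring
  · simp [Fintype.sum_option, ite_and]
    ring

lemma stat_twoFixed (W : Type*) [Fintype W] [DecidableEq W] :
    ((twoFixed W).card : ℚ) = (Fintype.card W).factorial * 1 ∧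
    ∑ σ ∈ twoFixed W, (cycleCount σ : ℚ) = (Fintype.card W).factorial *
      (1 * harm (Fintype.card W) + 2) := by
  refine sum_two_points (fun p q => p = none ∧ q = some none) _ _ ?_ ?_
  · simp [ite_and]
  · simp [ite_and]
    norm_num

lemma stat_fixed (W : Type*) [Fintype W] [DecidableEq W] (x : Option (Option W))
    (hx : x = none ∨ x = some none) :
    ((oneArc x x).card : ℚ) = (Fintype.card W).factorial * (Fintype.card W + 1) ∧
    ∑ σ ∈ oneArc x x, (cycleCount σ : ℚ) = (Fintype.card W).factorial *
      ((Fintype.card W + 1) * harm (Fintype.card W) + (Fintype.card W + 2)) := by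
  rcases hx with rfl | rfl
  · refine sum_two_points (fun p _ => p = none ∧ (none = none ∨ p ≠ none)) _ _ ?_ ?_
    · simp
    · simp [Fintype.sum_option]
      ring
  · refine sum_two_points (W := W)
      (fun _ q => q = some none ∧ ((some none : Option (Option W)) = some none ∨ q ≠ some none))
      _ _ ?_ ?_
    · simp [Finset.filter_ne', Finset.card_erase_of_mem]
    · simp [Fintype.sum_option]
      ring

lemma stat_arc (W : Type*) [Fintype W] [DecidableEq W] (x y : Option (Option W))
    (hxy : Special x y) :
    ((oneArc x y).card : ℚ) = (Fintype.card W).factorial * Fintype.card W ∧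
    ∑ σ ∈ oneArc x y, (cycleCount σ : ℚ) = (Fintype.card W).factorial *
      (Fintype.card W * harm (Fintype.card W) + 0) := by
  rcases hxy with ⟨rfl, rfl⟩ | ⟨rfl, rfl⟩
  · refine sum_two_points (fun p q => q = none ∧ (none = some none ∨ p ≠ some none)) _ _ ?_ ?_
    · simp [Fintype.sum_option, ite_and]
    · simp [Fintype.sum_option, ite_and]
  · refine sum_two_points (fun p q => p = some none ∧ (some none = none ∨ q ≠ none)) _ _ ?_ ?_
    · simp [Fintype.sum_option, ite_and]
    · simp [Fintype.sum_option, ite_and]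

/-- The cycle-factors of `twoBlocks W`, sorted by their crossing arcs: none; one in each direction,
starting at `y` on the left and at `x` on the right; or all four. By `cross_balance` there are no
other possibilities. -/
lemma sum_split {W : Type*} [Fintype W] [DecidableEq W] [DecidableRel (twoBlocks W)]
    (f : Perm (Option (Option W) ⊕ Option (Option W)) → ℚ) :
    let C := cycleFactors (twoBlocks W)
    let E : Option (Option W) → Option (Option W) → Finset _ := fun x y => C.filter fun σ =>
      σ (Sum.inl y) = Sum.inr y ∧ σ (Sum.inr x) = Sum.inl x ∧
        ∀ z, (z = none ∨ z = some none) → σ (Sum.inl z) = Sum.inr z → z = y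
    ∑ σ ∈ C, f σ =
      ∑ σ ∈ C.filter (fun σ => σ (Sum.inl none) ≠ Sum.inr none ∧
        σ (Sum.inl (some none)) ≠ Sum.inr (some none)), f σ +
      (∑ σ ∈ E none none, f σ + ∑ σ ∈ E (some none) (some none), f σ) +
      (∑ σ ∈ E none (some none), f σ + ∑ σ ∈ E (some none) none, f σ) +
      ∑ σ ∈ C.filter (fun σ => σ (Sum.inl none) = Sum.inr none ∧
        σ (Sum.inl (some none)) = Sum.inr (some none)), f σ := by
  intro C E
  simp only [E, Finset.sum_filter, ← Finset.sum_add_distrib]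
  refine Finset.sum_congr rfl fun σ hσ => ?_
  have hb := cross_balance σ ((mem_cycleFactors _ _).1 hσ)
  by_cases h1 : σ (Sum.inl none) = Sum.inr none <;>
    by_cases h2 : σ (Sum.inl (some none)) = Sum.inr (some none) <;>
    by_cases h3 : σ (Sum.inr none) = Sum.inl none <;>
    by_cases h4 : σ (Sum.inr (some none)) = Sum.inl (some none) <;>
    simp [h1, h2, h3, h4] at hb ⊢

/-- The number of cycle-factors of `twoBlocks W`, and their total number of cycles. -/
lemma twoBlocks_stat (W : Type*) [Fintype W] [DecidableEq W] [DecidableRel (twoBlocks W)]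
    (m : ℚ) (hm : m = Fintype.card W) :
    ((cycleFactors (twoBlocks W)).card : ℚ) = ((Fintype.card W).factorial : ℚ) ^ 2 *
      (m ^ 4 + 2 * m ^ 3 + 7 * m ^ 2 + 6 * m + 4) ∧
    ∑ σ ∈ cycleFactors (twoBlocks W), (cycleCount σ : ℚ) =
      ((Fintype.card W).factorial : ℚ) ^ 2 *
      (2 * harm (Fintype.card W) * (m ^ 4 + 2 * m ^ 3 + 7 * m ^ 2 + 6 * m + 4) +
        (4 * m ^ 3 + 8 * m ^ 2 + 16 * m + 12)) := by
  have l : (none : Option (Option W)) = none ∨ (none : Option (Option W)) = some none := Or.inl rfl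
  have r : some none = (none : Option (Option W)) ∨ some none = (some none : Option (Option W)) :=
    Or.inr rfl
  have e0 := case_none (W := W) rfl
  have e1 := case_one (W := W) none none l l rfl
  have e2 := case_one (W := W) (some none) (some none) r r rfl
  have e3 := case_one (W := W) none (some none) l r rfl
  have e4 := case_one (W := W) (some none) none r l rfl
  have e5 := case_two (W := W) rfl
  have s0 := stat_noArc W
  have s1 := stat_fixed W none l
  have s2 := stat_fixed W (some none) r
  have s3 := stat_arc W none (some none) (Or.inl ⟨rfl, rfl⟩)
  have s4 := stat_arc W (some none) none (Or.inr ⟨rfl, rfl⟩)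
  have s5 := stat_twoFixed W
  rw [s0.1, s0.2] at e0
  rw [s1.1, s1.2] at e1
  rw [s2.1, s2.2] at e2
  rw [s3.1, s3.2, s4.1, s4.2] at e3 e4
  rw [s5.1, s5.2] at e5
  rw [← hm] at e0 e1 e2 e3 e4
  constructor
  · have h := sum_split (W := W) fun _ => 1
    simp only [Finset.sum_const, nsmul_eq_mul, mul_one] at h
    rw [h, e0.1, e1.1, e2.1, e3.1, e4.1, e5.1]
    ring
  · have h := sum_split (W := W) fun σ => (cycleCount σ : ℚ)
    simp only at h
    rw [h, e0.2, e1.2, e2.2, e3.2, e4.2, e5.2]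
    ring

/-- For `m = |W|` the difference of the two sides is `|W|!²` times
`(6m⁴ + 8m³ + 10m² + 16m) / ((m + 1)(m + 2))`. -/
lemma twoBlocks_lt (W : Type*) [Fintype W] [DecidableEq W] [DecidableRel (twoBlocks W)]
    (hW : 1 ≤ Fintype.card W) :
    (2 : ℚ) * harm (Fintype.card W + 2) * ((cycleFactors (twoBlocks W)).card : ℚ) <
      ∑ σ ∈ cycleFactors (twoBlocks W), (cycleCount σ : ℚ) := by
  obtain ⟨h1, h2⟩ := twoBlocks_stat W _ rfl
  rw [h1, h2, harm_succ, harm_succ]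
  have hm : (1 : ℚ) ≤ Fintype.card W := by exact_mod_cast hW
  have hf : (0 : ℚ) < ((Fintype.card W).factorial : ℚ) ^ 2 := by positivity
  push_cast
  generalize (Fintype.card W : ℚ) = m at *
  generalize ((Fintype.card W).factorial : ℚ) ^ 2 = F at *
  generalize harm (Fintype.card W) = h at *
  have key : 2 * (1 / (m + 1) + 1 / (m + 1 + 1)) *
      (m ^ 4 + 2 * m ^ 3 + 7 * m ^ 2 + 6 * m + 4) < 4 * m ^ 3 + 8 * m ^ 2 + 16 * m + 12 := by
    have p1 : 0 < m + 1 := by linarith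
    have p2 : 0 < m + 1 + 1 := by linarith
    have hd : 4 * m ^ 3 + 8 * m ^ 2 + 16 * m + 12 - 2 * (1 / (m + 1) + 1 / (m + 1 + 1)) *
        (m ^ 4 + 2 * m ^ 3 + 7 * m ^ 2 + 6 * m + 4) =
        (6 * m ^ 4 + 8 * m ^ 3 + 10 * m ^ 2 + 16 * m) / ((m + 1) * (m + 1 + 1)) := by
      field_simp
      ring
    have : 0 < (6 * m ^ 4 + 8 * m ^ 3 + 10 * m ^ 2 + 16 * m) / ((m + 1) * (m + 1 + 1)) := by
      have : 0 < m := by linarith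
      positivity
    linarith
  nlinarith [mul_lt_mul_of_pos_left key hf]

/-! ### Adding complete blocks -/

/-- The disjoint union of `G` with a complete digraph (with loops) on `W`. -/
def addComplete {V : Type*} (G : V → V → Prop) (W : Type*) : V ⊕ W → V ⊕ W → Prop
  | Sum.inl x, Sum.inl y => G x y
  | Sum.inr _, Sum.inr _ => True
  | Sum.inl _, Sum.inr _ => False
  | Sum.inr _, Sum.inl _ => False

lemma addComplete_regular {V W : Type*} [Fintype V] [Fintype W] (G : V → V → Prop)
    [DecidableRel G] [DecidableRel (addComplete G W)]
    (h : IsRegularDigraph G (Fintype.card W)) :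
    IsRegularDigraph (addComplete G W) (Fintype.card W) := by
  intro v
  rw [Finset.card_filter, Finset.card_filter]
  rcases v with v | v
  · have := h v
    rw [Finset.card_filter, Finset.card_filter] at this
    simp [Fintype.sum_sum_type, addComplete]
    -- the remaining mismatch is one of decidability instances
    convert this using 3 <;> split_ifs with hg <;> first | exact if_pos hg | exact if_neg hg
  · simp [Fintype.sum_sum_type, addComplete]

/-- Adding a complete block multiplies the number of cycle-factors by `|W|!` and raises the
expected number of cycles by `H_{|W|}`. -/
lemma addComplete_stat {V W : Type*} [Fintype V] [DecidableEq V] [Fintype W] [DecidableEq W]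
    (G : V → V → Prop) [DecidableRel G] [DecidableRel (addComplete G W)] :
    ((cycleFactors (addComplete G W)).card : ℚ) =
      (cycleFactors G).card * (Fintype.card W).factorial ∧
    ∑ σ ∈ cycleFactors (addComplete G W), (cycleCount σ : ℚ) =
      (Fintype.card W).factorial * ((∑ σ ∈ cycleFactors G, (cycleCount σ : ℚ)) +
        harm (Fintype.card W) * (cycleFactors G).card) := by
  have h := sum_of_product 1 (cycleFactors (addComplete G W)) (cycleFactors G)
    (univ : Finset (Perm W)) 0 ?_ ?_ ?_
  · rw [sum_cycleCount, card_univ, Fintype.card_perm] at h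
    refine ⟨h.1, h.2.trans ?_⟩
    ring
  · intro σ hσ v
    have := (mem_cycleFactors _ _).1 hσ (Sum.inl v)
    rcases hw : σ (Sum.inl v) with t | t
    · simp [hw]
    · rw [hw] at this
      exact this.elim
  · intro α β
    simp [mem_cycleFactors, addComplete]
  · intro α _ β _
    simp [cycleCount_sumCongr]

end

theorem stmt_0 (d k : ℕ) (hd : 3 ≤ d) (hk : 2 ≤ k) :
    ∃ (V : Type) (_ : Fintype V) (_ : DecidableEq V) (G : V → V → Prop) (_ : DecidableRel G),
      Fintype.card V = k * d ∧ IsRegularDigraph G d ∧ (cycleFactors G).Nonempty ∧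
      (k : ℚ) * harm d * ((cycleFactors G).card : ℚ) <
        ∑ σ ∈ cycleFactors G, (cycleCount σ : ℚ) := by
  classical
  induction k, hk using Nat.le_induction with
  | base =>
    obtain ⟨m, rfl⟩ : ∃ m, d = m + 2 := ⟨d - 2, by omega⟩
    have hlt := twoBlocks_lt (Fin m) (by rw [Fintype.card_fin]; omega)
    have hreg := twoBlocks_regular (Fin m)
    rw [Fintype.card_fin] at hlt hreg
    refine ⟨_, inferInstance, inferInstance, twoBlocks (Fin m), inferInstance, ?_, hreg, ?_, ?_⟩
    · simp
      ring
    · rw [Finset.nonempty_iff_ne_empty]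
      intro h
      simp [h] at hlt
    · exact_mod_cast hlt
  | succ k hk ih =>
    obtain ⟨V, _, _, G, _, hcard, hreg, hne, hlt⟩ := ih
    have hreg' := addComplete_regular (W := Fin d) G (by rwa [Fintype.card_fin])
    obtain ⟨h1, h2⟩ := addComplete_stat (W := Fin d) G
    rw [Fintype.card_fin] at h1 h2 hreg'
    refine ⟨V ⊕ Fin d, inferInstance, inferInstance, addComplete G (Fin d), inferInstance, ?_,
      hreg', ?_, ?_⟩
    · simp [hcard]
      ring
    · rw [← Finset.card_pos] at hne ⊢
      have : (0 : ℚ) < (cycleFactors (addComplete G (Fin d))).card := by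
        rw [h1]
        have : (0 : ℚ) < (cycleFactors G).card := by exact_mod_cast hne
        positivity
      exact_mod_cast this
    · rw [h1, h2]
      have hf : (0 : ℚ) < (d.factorial : ℚ) := by positivity
      have := mul_lt_mul_of_pos_left hlt hf
      push_cast
      linarith
end

section
/- Let G be a 2-regular digraph on a finite vertex type V, and let u, v ∈ V with G u v. Then |C(G)| ≠ 0 and 2·|{σ ∈ C(G) : σ u = v}| = |C(G)|; that is, every directed edge of G belongs to a uniformly random cycle-factor of G with probability exactly 1/2. -/
/-- Pigeonhole: three members of a two-element set cannot be pairwise distinct. -/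
theorem eq_or_eq_or_eq_of_card_two {V : Type*} [Fintype V] {p : V → Prop} [DecidablePred p]
    (h : (Finset.univ.filter p).card = 2) {x y z : V} (hx : p x) (hy : p y) (hz : p z) :
    x = y ∨ x = z ∨ y = z := by
  by_contra! hne
  have : 2 < (Finset.univ.filter p).card :=
    Finset.two_lt_card.mpr ⟨x, by simpa using hx, y, by simpa using hy, z, by simpa using hz, hne⟩
  omega

theorem cycleFactors_nonempty {V : Type*} [Fintype V] [DecidableEq V] (G : V → V → Prop)
    [DecidableRel G] (hreg : IsRegularDigraph G 2) : (cycleFactors G).Nonempty := by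
  obtain ⟨f, hf, hG⟩ := (Finset.all_card_le_biUnion_card_iff_exists_injective
    (fun a => Finset.univ.filter fun w => G a w)).mp (by
      intro S
      -- Each vertex of `S` sends two edges into the out-neighbourhood of `S`,
      -- and each vertex there receives at most two of them.
      have h := Finset.card_mul_le_card_mul (s := S)
        (t := S.biUnion fun a => Finset.univ.filter fun w => G a w) (m := 2) (n := 2) G
        (by
          intro a ha
          rw [← (hreg a).1]
          refine Finset.card_le_card fun w hw => ?_
          have hw' : G a w := by simpa using hw
          simp only [Finset.mem_bipartiteAbove, Finset.mem_biUnion]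
          exact ⟨⟨a, ha, hw⟩, hw'⟩)
        (by
          intro w _
          rw [← (hreg w).2]
          refine Finset.card_le_card fun a ha => ?_
          simpa using ((Finset.mem_bipartiteBelow G).mp ha).2)
      omega)
  refine ⟨Equiv.ofBijective f (Finite.injective_iff_bijective.mp hf), ?_⟩
  simpa [cycleFactors] using hG

/-- The edges of a 2-regular digraph outside a given cycle-factor contain a cycle-factor. -/
theorem exists_complement {V : Type*} [Fintype V] [DecidableEq V] (G : V → V → Prop)
    [DecidableRel G] (hreg : IsRegularDigraph G 2) (σ : Equiv.Perm V) (hσ : σ ∈ cycleFactors G) :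
    ∃ τ ∈ cycleFactors G, ∀ a, τ a ≠ σ a := by
  have hσ' : ∀ a, G a (σ a) := by simpa [cycleFactors] using hσ
  have hother : ∀ a, ∃ w, G a w ∧ w ≠ σ a := fun a => by
    have h1 : 1 < (Finset.univ.filter fun w => G a w).card := by rw [(hreg a).1]; omega
    obtain ⟨w, hw, hne⟩ := Finset.exists_mem_ne h1 (σ a)
    exact ⟨w, by simpa using hw, hne⟩
  choose f hf hne using hother
  have hinj : Function.Injective f := by
    intro a b hab
    -- The in-neighbours `a`, `b`, `σ⁻¹ (f a)` of `f a` are not distinct,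
    -- and the third differs from the other two.
    have h3 : G (σ.symm (f a)) (f a) := by simpa using hσ' (σ.symm (f a))
    rcases eq_or_eq_or_eq_of_card_two (hreg (f a)).2 (hf a) (hab ▸ hf b) h3 with h | h | h
    · exact h
    · exact absurd ((Equiv.eq_symm_apply σ).mp h).symm (hne a)
    · exact absurd (hab.symm.trans ((Equiv.eq_symm_apply σ).mp h).symm) (hne b)
  refine ⟨Equiv.ofBijective f (Finite.injective_iff_bijective.mp hinj), ?_, hne⟩
  simpa [cycleFactors] using hf

theorem stmt_1 {V : Type*} [Fintype V] [DecidableEq V] (G : V → V → Prop) [DecidableRel G]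
    (hreg : IsRegularDigraph G 2) (u v : V) (huv : G u v) :
    (cycleFactors G).card ≠ 0 ∧
      2 * ((cycleFactors G).filter fun σ => σ u = v).card = (cycleFactors G).card := by
  refine ⟨(Finset.card_pos.mpr (cycleFactors_nonempty G hreg)).ne', ?_⟩
  choose! c hc hne using exists_complement G hreg
  have hG : ∀ σ ∈ cycleFactors G, ∀ a, G a (σ a) := fun σ hσ => by simpa [cycleFactors] using hσ
  have hcc : ∀ σ ∈ cycleFactors G, c (c σ) = σ := by
    intro σ hσ
    ext a
    rcases eq_or_eq_or_eq_of_card_two (hreg a).1 (hG _ (hc _ (hc _ hσ)) a) (hG _ (hc _ hσ) a)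
      (hG _ hσ a) with h | h | h
    · exact absurd h (hne _ (hc _ hσ) a)
    · exact h
    · exact absurd h (hne _ hσ a)
  have hcard : ((cycleFactors G).filter fun σ => σ u = v).card =
      ((cycleFactors G).filter fun σ => ¬ σ u = v).card := by
    refine Finset.card_nbij' c c ?_ ?_ ?_ ?_
    · intro σ h
      obtain ⟨hσ, huσ⟩ := Finset.mem_filter.mp h
      exact Finset.mem_filter.mpr ⟨hc σ hσ, fun h' => hne σ hσ u (h'.trans huσ.symm)⟩
    · intro σ h
      obtain ⟨hσ, huσ⟩ := Finset.mem_filter.mp h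
      refine Finset.mem_filter.mpr ⟨hc σ hσ, ?_⟩
      rcases eq_or_eq_or_eq_of_card_two (hreg u).1 (hG _ (hc _ hσ) u) huv (hG _ hσ u) with
        h | h | h
      · exact h
      · exact absurd h (hne σ hσ u)
      · exact absurd h.symm huσ
    · exact fun σ h => hcc σ (Finset.mem_filter.mp h).1
    · exact fun σ h => hcc σ (Finset.mem_filter.mp h).1
  have hsum := Finset.card_filter_add_card_filter_not (s := cycleFactors G) (fun σ => σ u = v)
  omega
end

section
/- Let n ≥ 4 and let σ be a permutation of ZMod n such that σ i ∈ {i − 1, i, i + 1} for every i ∈ ZMod n. Then exactly one of the following holds: (1) σ i = i + 1 for all i (the forward Hamilton cycle); (2) σ i = i − 1 for all i (the backward Hamilton cycle); (3) σ ∘ σ = id, and every i with σ i ≠ i satisfies σ i = i + 1 or σ i = i − 1, so σ is a product of disjoint adjacent transpositions and fixed points. -/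
/-!
If `σ i = i + 1` and `σ (i + 1) ≠ i`, then injectivity rules out `σ (i + 1) = i + 1`, so
`σ (i + 1) = i + 2`. The value `i + 1` is already taken, so `σ (i + 2) ≠ i + 1` and the situation
repeats at `i + 1`. Going round the cycle, `σ` is the forward rotation. The same holds for the
backward direction, so both are treated at once with a step `s = ±1` (`perm_eq_add_of_not_swap`). Hence a permutation that is neither rotation
swaps `i` and `σ i` for every `i`, i.e. is an involution. The three cases exclude one another
because `2 ≠ 0` in `ZMod n`.
-/

/-- One step `s` that is not immediately undone forces `σ` to be the rotation by `s`. The condition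
`s * s = 1` (used with `s = ±1`) makes every vertex reachable by steps `s`. -/
lemma perm_eq_add_of_not_swap {n : ℕ} [NeZero n] (σ : Equiv.Perm (ZMod n)) (s : ZMod n)
    (hs : s * s = 1) (hs0 : s ≠ 0) (hs2 : s + s ≠ 0)
    (hσ : ∀ i, σ i = i - s ∨ σ i = i ∨ σ i = i + s)
    (i : ZMod n) (hi : σ i = i + s) (hi' : σ (i + s) ≠ i) (j : ZMod n) : σ j = j + s := by
  have step : ∀ a, σ a = a + s → σ (a + s) ≠ a →
      σ (a + s) = a + s + s ∧ σ (a + s + s) ≠ a + s := by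
    intro a ha ha'
    constructor
    · rcases hσ (a + s) with h | h | h
      · exact absurd (by simpa using h) ha'
      · exact absurd (by simpa using σ.injective (h.trans ha.symm)) hs0
      · exact h
    · intro h
      have h1 := σ.injective (h.trans ha.symm)
      rw [add_assoc] at h1
      exact hs2 (by simpa using h1)
  have run : ∀ k : ℕ, σ (i + k * s) = i + k * s + s ∧ σ (i + k * s + s) ≠ i + k * s := by
    intro k
    induction k with
    | zero => simpa using ⟨hi, hi'⟩
    | succ k ih =>
      have e : i + ((k + 1 : ℕ) : ZMod n) * s = i + k * s + s := by push_cast; ring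
      rw [e]
      exact step _ ih.1 ih.2
  -- Since `s * s = 1`, the vertex `j` is reached from `i` after `(j - i) * s` steps.
  have h := (run ((j - i) * s).val).1
  have e : i + (((j - i) * s).val : ZMod n) * s = j := by
    rw [ZMod.natCast_zmod_val, mul_assoc, hs]; ring
  rwa [e] at h

theorem stmt_5 (n : ℕ) (hn : 4 ≤ n) (σ : Equiv.Perm (ZMod n))
    (hσ : ∀ i : ZMod n, σ i = i - 1 ∨ σ i = i ∨ σ i = i + 1) :
    ((∀ i : ZMod n, σ i = i + 1) ∧ ¬(∀ i : ZMod n, σ i = i - 1) ∧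
        ¬(σ * σ = 1 ∧ ∀ i : ZMod n, σ i ≠ i → σ i = i + 1 ∨ σ i = i - 1)) ∨
      (¬(∀ i : ZMod n, σ i = i + 1) ∧ (∀ i : ZMod n, σ i = i - 1) ∧
        ¬(σ * σ = 1 ∧ ∀ i : ZMod n, σ i ≠ i → σ i = i + 1 ∨ σ i = i - 1)) ∨
      (¬(∀ i : ZMod n, σ i = i + 1) ∧ ¬(∀ i : ZMod n, σ i = i - 1) ∧
        (σ * σ = 1 ∧ ∀ i : ZMod n, σ i ≠ i → σ i = i + 1 ∨ σ i = i - 1)) := by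
  have : NeZero n := ⟨by omega⟩
  have h1 : (1 : ZMod n) ≠ 0 := by
    intro h
    have := (ZMod.natCast_eq_zero_iff 1 n).1 (by exact_mod_cast h)
    exact absurd (Nat.le_of_dvd (by norm_num) this) (by omega)
  have h2 : (1 + 1 : ZMod n) ≠ 0 := by
    intro h
    have := (ZMod.natCast_eq_zero_iff 2 n).1 (by push_cast; rw [← h]; norm_num)
    exact absurd (Nat.le_of_dvd (by norm_num) this) (by omega)
  have hsq : ∀ i, (σ * σ) i = σ (σ i) := fun i => rfl
  have hdir : ∀ i : ZMod n, σ i ≠ i → σ i = i + 1 ∨ σ i = i - 1 := by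
    intro i hi
    rcases hσ i with h | h | h
    · exact Or.inr h
    · exact absurd h hi
    · exact Or.inl h
  by_cases hf : ∀ i, σ i = i + 1
  · refine Or.inl ⟨hf, fun hb => h2 ?_, fun ⟨h, _⟩ => h2 ?_⟩
    · linear_combination hb 0 - hf 0
    · have h' : σ (σ 0) = 0 := by rw [← hsq, h]; rfl
      rw [hf, hf] at h'
      linear_combination h'
  by_cases hb : ∀ i, σ i = i - 1
  · refine Or.inr (Or.inl ⟨hf, hb, fun ⟨h, _⟩ => h2 ?_⟩)
    have h' : σ (σ 0) = 0 := by rw [← hsq, h]; rfl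
    rw [hb, hb] at h'
    linear_combination -h'
  refine Or.inr (Or.inr ⟨hf, hb, ?_, hdir⟩)
  ext1 i
  change σ (σ i) = i
  by_contra hne
  rcases hσ i with h | h | h
  · refine hb fun j => ?_
    rw [h] at hne
    have := perm_eq_add_of_not_swap σ (-1) (by ring) (neg_ne_zero.2 h1)
      (fun e => h2 (by linear_combination -e))
      (fun i => by rcases hσ i with h | h | h <;> simp [h, sub_eq_add_neg])
      i (by rw [h, sub_eq_add_neg]) (by rwa [← sub_eq_add_neg]) j
    rw [this, sub_eq_add_neg]
  · exact hne (by rw [h, h])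
  · rw [h] at hne
    exact hf (perm_eq_add_of_not_swap σ 1 (by ring) h1 h2 hσ i h hne)
end

section
/- Let V be a finite type with n elements and let F be a partial permutation on V with r = |F| prescribed pairs. Let q be the number of directed cycle components of F, i.e. the number of cyclic sequences a_0, a_1, …, a_{ℓ−1}, a_ℓ = a_0 of distinct points of V (ℓ ≥ 1, counted up to rotation) with (a_t, a_{t+1}) ∈ F for all 0 ≤ t < ℓ. Then ∑_{π ⊇ F} c(π) = (n − r)!·(H_{n−r} + q), where the sum is over all permutations π of V extending F. -/
/-- `F` is a partial permutation: no two pairs share a first coordinate,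
and no two pairs share a second coordinate. -/
def IsPartialPerm {V : Type*} (F : Finset (V × V)) : Prop :=
  (∀ p ∈ F, ∀ q ∈ F, p.1 = q.1 → p = q) ∧ (∀ p ∈ F, ∀ q ∈ F, p.2 = q.2 → p = q)

/-- `a` lies on a directed cycle of `F`: there is a closed walk through `F`
starting and ending at `a` (of length `ℓ + 1 ≥ 1`). -/
def OnCycle {V : Type*} (F : Finset (V × V)) (a : V) : Prop :=
  ∃ ℓ : ℕ, ∃ f : ℕ → V, f 0 = a ∧ f (ℓ + 1) = a ∧ ∀ t ≤ ℓ, (f t, f (t + 1)) ∈ F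

/-- The number of directed cycle components of the partial permutation `F`:
the number of connected components of the points of `V` lying on directed
cycles of `F`, connected along the pairs of `F`. -/
noncomputable def cycleComponentCount {V : Type*} (F : Finset (V × V)) : ℕ :=
  Nat.card (Quot fun a b : {x : V // OnCycle F x} => ((a : V), (b : V)) ∈ F)

open Relation

/-! ### Cycle components and the effect of adding a pair -/

section Components

variable {V : Type*}

/-- The relation "`y` is the prescribed image of `x`" given by a set of pairs. -/
def Step (F : Finset (V × V)) (x y : V) : Prop := (x, y) ∈ F

theorem onCycle_iff (F : Finset (V × V)) (a : V) : OnCycle F a ↔ TransGen (Step F) a a := by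
  constructor
  · rintro ⟨l, f, h0, h1, h⟩
    have key : ∀ t ≤ l, TransGen (Step F) (f 0) (f (t + 1)) := by
      intro t
      induction t with
      | zero => exact fun ht => TransGen.single (h 0 ht)
      | succ t ih => exact fun ht => (ih (by omega)).tail (h _ ht)
    have := key l le_rfl
    rwa [h0, h1] at this
  · intro h
    have key : ∀ x y, TransGen (Step F) x y →
        ∃ l : ℕ, ∃ f : ℕ → V, f 0 = x ∧ f (l + 1) = y ∧ ∀ t ≤ l, (f t, f (t + 1)) ∈ F := by
      intro x y hxy
      induction hxy using TransGen.head_induction_on with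
      | single h =>
        rename_i x
        refine ⟨0, fun n => if n = 0 then x else y, by simp, by simp, ?_⟩
        intro t ht
        obtain rfl : t = 0 := by omega
        simpa [Step] using h
      | head h _ ih =>
        rename_i x _ _
        obtain ⟨l, f, h0, h1, hf⟩ := ih
        refine ⟨l + 1, fun n => Nat.casesOn n x f, rfl, h1, ?_⟩
        intro t ht
        cases t with
        | zero => simpa [h0, Step] using h
        | succ t => exact hf t (by omega)
    exact key a a h

theorem Step.right_unique {F : Finset (V × V)} (hF : IsPartialPerm F) {x y z : V}
    (h : Step F x y) (h' : Step F x z) : y = z :=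
  congrArg Prod.snd (hF.1 _ h _ h' rfl)

theorem Step.left_unique {F : Finset (V × V)} (hF : IsPartialPerm F) {x y z : V}
    (h : Step F x z) (h' : Step F y z) : x = y :=
  congrArg Prod.fst (hF.2 _ h _ h' rfl)

/-- The successor of a point on a cycle is on a cycle, and so is its predecessor. -/
theorem onCycle_congr {F : Finset (V × V)} (hF : IsPartialPerm F) {x y : V}
    (h : Step F x y) : OnCycle F x ↔ OnCycle F y := by
  rw [onCycle_iff, onCycle_iff]
  constructor
  · intro hx
    obtain ⟨z, hz, hzx⟩ := TransGen.head'_iff.1 hx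
    obtain rfl := h.right_unique hF hz
    exact TransGen.tail' hzx h
  · intro hy
    obtain ⟨z, hyz, hz⟩ := TransGen.tail'_iff.1 hy
    obtain rfl := h.left_unique hF hz
    exact TransGen.head' h hyz

/-- A point from which a dead end can be reached is not on a cycle. -/
theorem not_onCycle_of_reach {F : Finset (V × V)} (hF : IsPartialPerm F) {a x : V}
    (ha : ∀ y, ¬ Step F a y) (h : ReflTransGen (Step F) x a) : ¬ OnCycle F x := by
  induction h using ReflTransGen.head_induction_on with
  | refl =>
    rw [onCycle_iff]
    intro h
    obtain ⟨z, hz, _⟩ := TransGen.head'_iff.1 h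
    exact ha z hz
  | head h _ ih => rwa [onCycle_congr hF h]

/-- The component of a point `a` without image is a path, and this path has a unique initial
point. -/
theorem existsUnique_start [Finite V] {F : Finset (V × V)} (hF : IsPartialPerm F) {a : V}
    (ha : ∀ y, ¬ Step F a y) :
    ∃! b, (∀ x, ¬ Step F x b) ∧ ReflTransGen (Step F) b a := by
  -- `Step F` is acyclic, hence well-founded, on the finite set of points that reach `a`.
  let r : {x // ReflTransGen (Step F) x a} → {x // ReflTransGen (Step F) x a} → Prop :=
    fun x y => TransGen (Step F) x y
  have hr : WellFounded r := by
    have : IsTrans _ r := ⟨fun _ _ _ h h' => TransGen.trans h h'⟩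
    have : Std.Irrefl r :=
      ⟨fun x h => not_onCycle_of_reach hF ha x.2 ((onCycle_iff F _).2 h)⟩
    exact Finite.wellFounded_of_trans_of_irrefl r
  obtain ⟨b, _, hb⟩ := hr.has_min Set.univ ⟨⟨a, .refl⟩, trivial⟩
  refine ⟨b, ⟨fun x hx => hb ⟨x, .head hx b.2⟩ trivial (TransGen.single hx), b.2⟩, ?_⟩
  rintro c ⟨hc, hca⟩
  have hb' : ∀ x, ¬ Step F x b := fun x hx => hb ⟨x, .head hx b.2⟩ trivial (TransGen.single hx)
  have hU : Relator.RightUnique (Function.swap (Step F)) :=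
    fun _ _ _ h h' => Step.left_unique hF h h'
  rcases ReflTransGen.total_of_right_unique hU (reflTransGen_swap.2 hca)
    (reflTransGen_swap.2 b.2) with h | h
  · rcases ReflTransGen.cases_head h with h | ⟨x, hx, _⟩
    · exact h
    · exact absurd hx (hc x)
  · rcases ReflTransGen.cases_head h with h | ⟨x, hx, _⟩
    · exact h.symm
    · exact absurd hx (hb' x)

variable [DecidableEq V]

theorem step_insert {F : Finset (V × V)} {a b x y : V} :
    Step (insert (a, b) F) x y ↔ (x = a ∧ y = b) ∨ Step F x y := by
  simp [Step]

theorem isPartialPerm_insert {F : Finset (V × V)} (hF : IsPartialPerm F) {a b : V}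
    (ha : ∀ y, ¬ Step F a y) (hb : ∀ x, ¬ Step F x b) : IsPartialPerm (insert (a, b) F) := by
  have ha' : ∀ p ∈ F, p.1 ≠ a := by rintro ⟨x, y⟩ hp rfl; exact ha y hp
  have hb' : ∀ p ∈ F, p.2 ≠ b := by rintro ⟨x, y⟩ hp rfl; exact hb x hp
  constructor
  · intro p hp q hq h
    rcases Finset.mem_insert.1 hp with rfl | hp <;> rcases Finset.mem_insert.1 hq with rfl | hq
    · rfl
    · exact absurd h.symm (ha' _ hq)
    · exact absurd h (ha' _ hp)
    · exact hF.1 p hp q hq h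
  · intro p hp q hq h
    rcases Finset.mem_insert.1 hp with rfl | hp <;> rcases Finset.mem_insert.1 hq with rfl | hq
    · rfl
    · exact absurd h.symm (hb' _ hq)
    · exact absurd h (hb' _ hp)
    · exact hF.2 p hp q hq h

/-- A closed walk through `F ∪ {(a, b)}` either avoids the new pair, or it can be cut at the first
and at the last use of that pair. -/
theorem onCycle_insert {F : Finset (V × V)} {a b x : V} :
    OnCycle (insert (a, b) F) x ↔
      OnCycle F x ∨ (ReflTransGen (Step F) x a ∧ ReflTransGen (Step F) b x) := by
  have mono : ∀ x y, Step F x y → Step (insert (a, b) F) x y :=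
    fun x y h => step_insert.2 (Or.inr h)
  rw [onCycle_iff, onCycle_iff]
  constructor
  · have key : ∀ x y, TransGen (Step (insert (a, b) F)) x y → TransGen (Step F) x y ∨
        (ReflTransGen (Step F) x a ∧ ReflTransGen (Step F) b y) := by
      intro x y h
      induction h with
      | single h =>
        rcases step_insert.1 h with ⟨rfl, rfl⟩ | h
        · exact Or.inr ⟨.refl, .refl⟩
        · exact Or.inl (.single h)
      | tail _ h ih =>
        rcases step_insert.1 h with ⟨rfl, rfl⟩ | h
        · rcases ih with ih | ih
          · exact Or.inr ⟨ih.to_reflTransGen, .refl⟩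
          · exact Or.inr ⟨ih.1, .refl⟩
        · rcases ih with ih | ih
          · exact Or.inl (ih.tail h)
          · exact Or.inr ⟨ih.1, ih.2.tail h⟩
    exact key x x
  · rintro (h | ⟨h, h'⟩)
    · exact TransGen.mono mono _ _ h
    · exact TransGen.trans_right (ReflTransGen.mono mono _ _ h)
        (TransGen.head' (step_insert.2 (Or.inl ⟨rfl, rfl⟩)) (ReflTransGen.mono mono _ _ h'))

theorem componentCount_not_closing {F : Finset (V × V)} (hF : IsPartialPerm F) {a b : V}
    (ha : ∀ y, ¬ Step F a y) (hba : ¬ ReflTransGen (Step F) b a) :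
    cycleComponentCount (insert (a, b) F) = cycleComponentCount F := by
  have hiff : ∀ x, OnCycle (insert (a, b) F) x ↔ OnCycle F x := by
    intro x
    rw [onCycle_insert]
    exact or_iff_left fun h => hba (h.2.trans h.1)
  refine Nat.card_congr (Quot.congr (Equiv.subtypeEquivRight hiff) ?_)
  rintro ⟨x, hx⟩ ⟨y, hy⟩
  refine step_insert.trans (or_iff_right ?_)
  rintro ⟨hxa, -⟩
  exact not_onCycle_of_reach hF ha .refl ((hiff _).1 (hxa ▸ hx))

open Classical in
/-- The new component is the path from `b` to `a`, closed up by the pair `(a, b)`; it is the value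
`none` under the bijection with `Option` of the old components. -/
theorem componentCount_closing [Finite V] {F : Finset (V × V)} (hF : IsPartialPerm F) {a b : V}
    (ha : ∀ y, ¬ Step F a y) (hba : ReflTransGen (Step F) b a) :
    cycleComponentCount (insert (a, b) F) = cycleComponentCount F + 1 := by
  have hna : ¬ OnCycle F a := not_onCycle_of_reach hF ha .refl
  have hnb : ¬ OnCycle F b := not_onCycle_of_reach hF ha hba
  have hb' : OnCycle (insert (a, b) F) b := onCycle_insert.2 (Or.inr ⟨hba, .refl⟩)
  let Q := Quot fun x y : {x : V // OnCycle F x} => ((x : V), (y : V)) ∈ F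
  let Q' := Quot fun x y : {x : V // OnCycle (insert (a, b) F) x} =>
    ((x : V), (y : V)) ∈ insert (a, b) F
  let toF : Q' → Option Q := Quot.lift
    (fun x => if h : OnCycle F x then some (Quot.mk _ ⟨x, h⟩) else none) (by
      rintro ⟨x, hx⟩ ⟨y, hy⟩ hxy
      rcases step_insert.1 hxy with ⟨hxa, hyb⟩ | h
      · have hx' : ¬ OnCycle F x := fun h => hna (hxa ▸ h)
        have hy' : ¬ OnCycle F y := fun h => hnb (hyb ▸ h)
        simp [hx', hy']
      · by_cases hx' : OnCycle F x
        · have hy' := (onCycle_congr hF h).1 hx'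
          simp only [hx', hy', dite_true]
          exact congrArg some (Quot.sound h)
        · have hy' : ¬ OnCycle F y := fun hy => hx' ((onCycle_congr hF h).2 hy)
          simp [hx', hy'])
  let invF : Option Q → Q' := fun o => o.elim (Quot.mk _ ⟨b, hb'⟩)
    (Quot.lift (fun x => Quot.mk _ ⟨x.1, onCycle_insert.2 (Or.inl x.2)⟩)
      (fun x y h => Quot.sound (step_insert.2 (Or.inr h))))
  have hpath : ∀ x, ReflTransGen (Step F) b x → ReflTransGen (Step F) x a →
      ∀ h : OnCycle (insert (a, b) F) x, (Quot.mk _ ⟨b, hb'⟩ : Q') = Quot.mk _ ⟨x, h⟩ := by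
    intro x hx
    induction hx with
    | refl => exact fun _ _ => rfl
    | tail hy hyx ih =>
      intro hxa h
      have hya := ReflTransGen.head hyx hxa
      refine (ih hya (onCycle_insert.2 (Or.inr ⟨hya, hy⟩))).trans ?_
      exact Quot.sound (step_insert.2 (Or.inr hyx))
  let e : Q' ≃ Option Q :=
    { toFun := toF
      invFun := invF
      left_inv := by
        rintro ⟨x, hx⟩
        by_cases h : OnCycle F x
        · simp [toF, invF, h]
        · obtain ⟨hxa, hbx⟩ := (onCycle_insert.1 hx).resolve_left h
          simpa [toF, invF, h] using hpath x hbx hxa hx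
      right_inv := by
        rintro (_ | ⟨x, hx⟩)
        · simp [toF, invF, hnb]
        · simp [toF, invF, hx] }
  exact (Nat.card_congr e).trans Finite.card_option

end Components

/-! ### Cycle components of the graph of a permutation -/

section Full

variable {V : Type*} [Fintype V] [DecidableEq V]

/-- The cycle components of the graph of `π` are the cycles of `π`: a component goes to its common
fixed point, or else to the factor `π.cycleOf x` for any of its points `x`. -/
theorem componentCount_of_full (F : Finset (V × V)) (π : Equiv.Perm V)
    (h : ∀ x y, (x, y) ∈ F ↔ π x = y) : cycleComponentCount F = cycleCount π := by
  have hpow : ∀ x (n : ℕ), TransGen (Step F) x ((π ^ (n + 1)) x) := by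
    intro x n
    induction n with
    | zero => exact .single ((h _ _).2 (by simp))
    | succ n ih => exact ih.tail ((h _ _).2 (by rw [pow_succ' π (n + 1)]; rfl))
  have hon : ∀ x, OnCycle F x := by
    intro x
    have := hpow x (orderOf π - 1)
    rw [Nat.sub_add_cancel (orderOf_pos π), pow_orderOf_eq_one] at this
    exact (onCycle_iff F x).2 this
  let Q := Quot fun x y : {x : V // OnCycle F x} => ((x : V), (y : V)) ∈ F
  let T := {c // c ∈ π.cycleFactorsFinset} ⊕ {x : V // x ∈ Finset.univ.filter fun x => π x = x}
  let g : {x : V // OnCycle F x} → T := fun x =>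
    if hx : π x = x then Sum.inr ⟨x, by simpa using hx⟩
    else Sum.inl ⟨π.cycleOf x, Equiv.Perm.cycleOf_mem_cycleFactorsFinset_iff.2
      (Equiv.Perm.mem_support.2 hx)⟩
  have hg : ∀ x y : {x : V // OnCycle F x}, ((x : V), (y : V)) ∈ F → g x = g y := by
    rintro ⟨x, hx⟩ ⟨y, hy⟩ hxy
    obtain rfl := (h _ _).1 hxy
    by_cases hfix : π x = x
    · congr 2; exact hfix.symm
    · have : π.cycleOf (π x) = π.cycleOf x :=
        Equiv.Perm.SameCycle.cycleOf_eq (Equiv.Perm.sameCycle_apply_left.2 (.refl _ _))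
      simp [g, hfix, this]
  have hQ : ∀ (n : ℕ) (x : V), (Quot.mk _ ⟨x, hon x⟩ : Q) = Quot.mk _ ⟨(π ^ n) x, hon _⟩ := by
    intro n x
    induction n with
    | zero => rfl
    | succ n ih =>
      exact ih.trans (Quot.sound ((h _ _).2 (by rw [pow_succ' π n]; rfl)))
  have hbij : Function.Bijective (Quot.lift g hg : Q → T) := by
    constructor
    · rintro ⟨x, hx⟩ ⟨y, hy⟩ hxy
      change g _ = g _ at hxy
      by_cases hfx : π x = x <;> by_cases hfy : π y = y
      · have : x = y := by
          simp only [g, hfx, hfy, dite_true] at hxy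
          exact congrArg Subtype.val (Sum.inr.inj hxy)
        subst this; rfl
      · simp [g, hfx, hfy] at hxy
      · simp [g, hfx, hfy] at hxy
      · have hc : π.cycleOf x = π.cycleOf y := by
          simp only [g, hfx, hfy, dite_false] at hxy
          exact congrArg Subtype.val (Sum.inl.inj hxy)
        have hs : π.SameCycle x y := by
          have hy' : y ∈ (π.cycleOf x).support := by
            rw [hc, Equiv.Perm.mem_support_cycleOf_iff]
            exact ⟨.refl _ _, Equiv.Perm.mem_support.2 hfy⟩
          exact (Equiv.Perm.mem_support_cycleOf_iff.1 hy').1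
        obtain ⟨n, rfl⟩ := hs.exists_nat_pow_eq
        exact hQ n x
    · rintro (⟨c, hc⟩ | ⟨x, hx⟩)
      · obtain ⟨x, hx⟩ := (Equiv.Perm.mem_cycleFactorsFinset_iff.1 hc).1.nonempty_support
        have hcx := Equiv.Perm.cycle_is_cycleOf hx hc
        have hfx : π x ≠ x := Equiv.Perm.mem_support.1
          (Equiv.Perm.mem_cycleFactorsFinset_support_le hc hx)
        refine ⟨Quot.mk _ ⟨x, hon x⟩, ?_⟩
        change g _ = _
        simp [g, hfx, hcx]
      · refine ⟨Quot.mk _ ⟨x, hon x⟩, ?_⟩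
        change g _ = _
        have hfx : π x = x := by simpa using hx
        simp [g, hfx]
  calc cycleComponentCount F = Nat.card T := Nat.card_congr (Equiv.ofBijective _ hbij)
    _ = cycleCount π := by
      rw [Nat.card_sum, Nat.card_eq_fintype_card, Nat.card_eq_fintype_card, Fintype.card_coe,
        Fintype.card_coe, cycleCount, Equiv.Perm.cycleType_def, Multiset.card_map, Finset.card_val]

end Full

/-! ### Summation over the extensions -/

section Main

variable {V : Type*} [DecidableEq V]

theorem card_dom {F : Finset (V × V)} (hF : IsPartialPerm F) :
    (F.image Prod.fst).card = F.card :=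
  Finset.card_image_of_injOn fun p hp q hq h => hF.1 p hp q hq h

theorem card_ran {F : Finset (V × V)} (hF : IsPartialPerm F) :
    (F.image Prod.snd).card = F.card :=
  Finset.card_image_of_injOn fun p hp q hq h => hF.2 p hp q hq h

variable [Fintype V]

/-- The extensions of `F`, split according to their value at a point where `F` is undefined. -/
theorem sum_split_s8 {F : Finset (V × V)} {a : V} (ha : ∀ y, ¬ Step F a y)
    (f : Equiv.Perm V → ℚ) :
    ∑ π ∈ Finset.univ.filter (fun π : Equiv.Perm V => ∀ p ∈ F, π p.1 = p.2), f π =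
      ∑ b ∈ (F.image Prod.snd)ᶜ, ∑ π ∈ Finset.univ.filter
        (fun π : Equiv.Perm V => ∀ p ∈ insert (a, b) F, π p.1 = p.2), f π := by
  rw [← Finset.sum_fiberwise_of_maps_to (g := fun π : Equiv.Perm V => π a)
    (t := (F.image Prod.snd)ᶜ)]
  · refine Finset.sum_congr rfl fun b _ => Finset.sum_congr ?_ fun _ _ => rfl
    ext π
    simp only [Finset.mem_filter, Finset.mem_univ, true_and, Finset.forall_mem_insert]
    exact and_comm
  · intro π hπ
    simp only [Finset.mem_filter, Finset.mem_univ, true_and] at hπ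
    simp only [Finset.mem_compl, Finset.mem_image, not_exists, not_and]
    rintro ⟨x, y⟩ hp hy
    obtain rfl : x = a := π.injective ((hπ _ hp).trans hy)
    exact ha y hp

theorem sum_base {F : Finset (V × V)} (hF : IsPartialPerm F) (hc : F.card = Fintype.card V) :
    ∑ π ∈ Finset.univ.filter (fun π : Equiv.Perm V => ∀ p ∈ F, π p.1 = p.2),
      (cycleCount π : ℚ) = cycleComponentCount F := by
  have hdom : ∀ x, ∃ y, (x, y) ∈ F := by
    intro x
    have : F.image Prod.fst = Finset.univ :=
      (Finset.card_eq_iff_eq_univ _).1 ((card_dom hF).trans hc)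
    have hx : x ∈ F.image Prod.fst := this ▸ Finset.mem_univ x
    obtain ⟨⟨x', y⟩, hp, rfl⟩ := Finset.mem_image.1 hx
    exact ⟨y, hp⟩
  choose f hf using hdom
  have hinj : Function.Injective f := fun x y hxy =>
    Step.left_unique hF (hf x) (by rw [hxy]; exact hf y)
  let π : Equiv.Perm V := Equiv.ofBijective f (Finite.injective_iff_bijective.1 hinj)
  have hπ : ∀ x y, (x, y) ∈ F ↔ π x = y := fun x y =>
    ⟨fun h => Step.right_unique hF (hf x) h, fun h => h ▸ hf x⟩
  have hs : Finset.univ.filter (fun π : Equiv.Perm V => ∀ p ∈ F, π p.1 = p.2) = {π} := by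
    ext σ
    simp only [Finset.mem_filter, Finset.mem_univ, true_and, Finset.mem_singleton]
    constructor
    · intro h
      ext x
      exact h _ (hf x)
    · rintro rfl ⟨x, y⟩ hp
      exact (hπ x y).1 hp
  rw [hs, Finset.sum_singleton, componentCount_of_full F π hπ]

theorem sum_cycleCount_s8 (m : ℕ) : ∀ F : Finset (V × V), IsPartialPerm F →
    F.card + m = Fintype.card V →
    ∑ π ∈ Finset.univ.filter (fun π : Equiv.Perm V => ∀ p ∈ F, π p.1 = p.2),
      (cycleCount π : ℚ) = (m.factorial : ℚ) * (harm m + cycleComponentCount F) := by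
  induction m with
  | zero =>
    intro F hF hc
    rw [sum_base hF (by simpa using hc)]
    simp [harm]
  | succ m ih =>
    intro F hF hc
    obtain ⟨a, ha⟩ : ∃ a, a ∉ F.image Prod.fst := by
      by_contra! hall
      have h1 := card_dom hF
      rw [Finset.eq_univ_of_forall hall, Finset.card_univ] at h1
      omega
    have ha : ∀ y, ¬ Step F a y := fun y hy => ha (Finset.mem_image.2 ⟨_, hy, rfl⟩)
    have hran : ∀ b, b ∈ (F.image Prod.snd)ᶜ ↔ ∀ x, ¬ Step F x b := by
      intro b; simp [Step]
    obtain ⟨b₀, ⟨hb₀, hb₀a⟩, huniq⟩ := existsUnique_start hF ha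
    have hterm : ∀ b ∈ (F.image Prod.snd)ᶜ, ∑ π ∈ Finset.univ.filter
        (fun π : Equiv.Perm V => ∀ p ∈ insert (a, b) F, π p.1 = p.2), (cycleCount π : ℚ) =
        (m.factorial : ℚ) * (harm m + cycleComponentCount F) +
          if b = b₀ then (m.factorial : ℚ) else 0 := by
      intro b hb
      have hb := (hran b).1 hb
      have hcard : (insert (a, b) F).card + m = Fintype.card V := by
        rw [Finset.card_insert_of_notMem (ha b)]; omega
      rw [ih _ (isPartialPerm_insert hF ha hb) hcard]
      split_ifs with h
      · subst h
        rw [componentCount_closing hF ha hb₀a]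
        push_cast; ring
      · rw [componentCount_not_closing hF ha fun hba => h (huniq b ⟨hb, hba⟩), add_zero]
    have hcompl : ((F.image Prod.snd)ᶜ).card = m + 1 := by
      rw [Finset.card_compl, card_ran hF]; omega
    rw [sum_split_s8 ha, Finset.sum_congr rfl hterm, Finset.sum_add_distrib, Finset.sum_const,
      hcompl, Finset.sum_ite_eq', if_pos ((hran b₀).2 hb₀)]
    have hH : harm (m + 1) = harm m + 1 / ((m : ℚ) + 1) := Finset.sum_range_succ _ _
    have hm : (m : ℚ) + 1 ≠ 0 := by positivity
    rw [hH, Nat.factorial_succ]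
    push_cast
    field_simp
    ring

end Main

theorem stmt_8 {V : Type*} [Fintype V] [DecidableEq V] (F : Finset (V × V))
    (hF : IsPartialPerm F) :
    ∑ π ∈ Finset.univ.filter fun π : Equiv.Perm V => ∀ p ∈ F, π p.1 = p.2,
        (cycleCount π : ℚ) =
      (Nat.factorial (Fintype.card V - F.card) : ℚ) *
        (harm (Fintype.card V - F.card) + (cycleComponentCount F : ℚ)) := by
  have hle : F.card ≤ Fintype.card V := card_dom hF ▸ Finset.card_le_univ _
  exact sum_cycleCount_s8 _ F hF (by omega)
end

section
/- For every integer d ≥ 3, the digraph X_d is d-regular on 2d vertices and the number of its cycle-factors equals |C(X_d)| = ((d − 2)!)²·(d⁴ − 6d³ + 19d² − 30d + 20). -/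
/-- Sizes of the six classes of `X_d`: classes `2` and `5` have size `d - 2`,
the other four classes have size `1`. -/
def XdSize (d : ℕ) : ZMod 6 → ℕ := fun i => if i = 2 ∨ i = 5 then d - 2 else 1

/-- The vertex type of `X_d`: the disjoint union over `i ∈ ZMod 6` of classes
of sizes `1, 1, d-2, 1, 1, d-2`. -/
abbrev XdVert (d : ℕ) := Σ i : ZMod 6, Fin (XdSize d i)

/-- The digraph `X_d`: an edge from `u` to `v` iff the class index of `v`
minus the class index of `u` lies in `{-1, 0, 1} ⊆ ZMod 6`. -/
def XdRel (d : ℕ) : XdVert d → XdVert d → Prop :=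
  fun u v => v.1 - u.1 = -1 ∨ v.1 - u.1 = 0 ∨ v.1 - u.1 = 1

instance (d : ℕ) : DecidableRel (XdRel d) := fun u v => by
  unfold XdRel; infer_instance

open Finset

/-! ### Colour-preserving bijections -/

/-- Two finite coloured types with equally large colour classes admit a colour-preserving
bijection. -/
lemma exists_equiv_of_fiber_card {V W K : Type*} [Fintype V] [Fintype W] [DecidableEq K]
    (c : V → K) (g : W → K)
    (h : ∀ k, #{v | c v = k} = #{w | g w = k}) :
    ∃ e : V ≃ W, ∀ v, g (e v) = c v := by
  have h' : ∀ k, Fintype.card {v // c v = k} = Fintype.card {w // g w = k} := by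
    intro k
    rw [Fintype.card_subtype, Fintype.card_subtype, h]
  refine ⟨(Equiv.sigmaFiberEquiv c).symm.trans ((Equiv.sigmaCongrRight fun k =>
    Fintype.equivOfCardEq (h' k)).trans (Equiv.sigmaFiberEquiv g)), fun v => ?_⟩
  exact (Fintype.equivOfCardEq (h' (c v)) ⟨v, rfl⟩).2

/-- If two colourings `c`, `g` of `V` have equally large colour classes, the permutations carrying
`c` to `g` form a coset of the stabiliser of `c`, so there are `∏ k, |c⁻¹ k|!` of them. -/
lemma card_colored_perms {V K : Type*} [Fintype V] [DecidableEq V] [Fintype K] [DecidableEq K]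
    (c g : V → K) (h : ∀ k, #{v | c v = k} = #{v | g v = k}) :
    #{σ : Equiv.Perm V | ∀ v, g (σ v) = c v} = ∏ k, (#{v | c v = k}).factorial := by
  obtain ⟨e, he⟩ := exists_equiv_of_fiber_card c g h
  have h1 := DomMulAct.stabilizer_card c
  simp only [Fintype.card_subtype] at h1
  rw [← h1]
  refine Finset.card_equiv (Equiv.mulLeft e⁻¹) fun σ => ?_
  simp only [mem_filter, mem_univ, true_and, funext_iff, Function.comp_apply,
    Equiv.coe_mulLeft, Equiv.Perm.mul_apply]
  refine forall_congr' fun v => ?_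
  rw [← he (e⁻¹ (σ v)), Equiv.Perm.inv_def, Equiv.apply_symm_apply]

/-! ### A non-dependent model of the digraph -/

/-- A non-dependent copy of the vertex type of `X_d` for `d = n + 2`: the four singleton classes
`0, 1, 3, 4` are the elements of `Fin 4`, in this order, and the two copies of `Fin n` are the large
classes `2` and `5`. -/
abbrev Model (n : ℕ) := Fin 4 ⊕ (Fin n ⊕ Fin n)

/-- The class index of a vertex. -/
def Model.cls {n : ℕ} : Model n → ZMod 6 :=
  Sum.elim ![0, 1, 3, 4] (Sum.elim (fun _ => 2) (fun _ => 5))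

/-- The edge relation of `X_d` on the model vertex type. -/
def Model.Rel {n : ℕ} (u v : Model n) : Prop :=
  v.cls - u.cls = -1 ∨ v.cls - u.cls = 0 ∨ v.cls - u.cls = 1

instance {n : ℕ} : DecidableRel (Model.Rel (n := n)) := fun u v => by
  unfold Model.Rel; infer_instance

/-- Whether the vertex lies in classes `{1, 2, 3}` (`true`), the out-neighbourhood of class `2`, or
in classes `{4, 5, 0}` (`false`), the out-neighbourhood of class `5`. -/
def Model.side {n : ℕ} : Model n → Bool :=
  Sum.elim ![false, true, true, false] (Sum.elim (fun _ => true) (fun _ => false))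

/-- The colouring in which each singleton vertex has its own colour, class `2` is coloured `true`
and class `5` is coloured `false`. -/
def Model.color {n : ℕ} : Model n → Fin 4 ⊕ Bool :=
  Sum.map id (Sum.elim (fun _ => true) (fun _ => false))

lemma Model.rel_B {n : ℕ} (i : Fin n) (w : Model n) :
    Model.Rel (Sum.inr (Sum.inl i)) w ↔ w.side = true := by
  rcases w with s | j | j
  · fin_cases s <;> simp [Model.Rel, Model.cls, Model.side] <;> decide
  · simp [Model.Rel, Model.cls, Model.side]
  · simp [Model.Rel, Model.cls, Model.side]; decide

lemma Model.rel_C {n : ℕ} (i : Fin n) (w : Model n) :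
    Model.Rel (Sum.inr (Sum.inr i)) w ↔ w.side = false := by
  rcases w with s | j | j
  · fin_cases s <;> simp [Model.Rel, Model.cls, Model.side] <;> decide
  · simp [Model.Rel, Model.cls, Model.side]; decide
  · simp [Model.Rel, Model.cls, Model.side]

lemma Model.card_side (n : ℕ) (b : Bool) : #{w : Model n | w.side = b} = n + 2 := by
  rw [Finset.card_filter]
  cases b <;> simp [Fintype.sum_sum_type, Model.side, Fin.sum_univ_four] <;> ring

lemma Model.card_color_inl (n : ℕ) (s : Fin 4) :
    #{w : Model n | w.color = Sum.inl s} = 1 := by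
  rw [Finset.card_filter]
  simp [Fintype.sum_sum_type, Model.color]

lemma Model.card_color_inr (n : ℕ) (b : Bool) :
    #{w : Model n | w.color = Sum.inr b} = n := by
  rw [Finset.card_filter]
  simp only [Fintype.sum_sum_type, Model.color]
  cases b <;> simp

/-! ### Restriction to the four singletons -/

/-- The property characterising the restrictions of cycle-factors to the four singleton vertices:
`f` follows edges, is injective, and takes exactly two values in `{1, 2, 3}`. -/
def Model.IsHead {n : ℕ} (f : Fin 4 → Model n) : Prop :=
  (∀ s, Model.Rel (Sum.inl s) (f s)) ∧ Function.Injective f ∧ #{s | (f s).side = true} = 2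

instance {n : ℕ} : DecidablePred (Model.IsHead (n := n)) := fun f => by
  unfold Model.IsHead; infer_instance

/-- The preimage of `{1, 2, 3}` under a cycle-factor has `n + 2` elements; it contains class `2`
and misses class `5`, so it contains exactly two of the singletons. -/
lemma Model.isHead_of_mem {n : ℕ} {σ : Equiv.Perm (Model n)}
    (hσ : σ ∈ cycleFactors (Model.Rel (n := n))) :
    Model.IsHead fun s => σ (Sum.inl s) := by
  simp only [cycleFactors, mem_filter, mem_univ, true_and] at hσ
  refine ⟨fun s => hσ _, σ.injective.comp Sum.inl_injective, ?_⟩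
  have h1 : #{v : Model n | (σ v).side = true} = n + 2 := by
    rw [← Model.card_side n true]
    exact Finset.card_equiv σ (by simp)
  have hB : ∀ i, (σ (Sum.inr (Sum.inl i))).side = true := fun i => (Model.rel_B i _).1 (hσ _)
  have hC : ∀ i, (σ (Sum.inr (Sum.inr i))).side = false := fun i => (Model.rel_C i _).1 (hσ _)
  rw [Finset.card_filter] at h1 ⊢
  simp only [Fintype.sum_sum_type, hB, hC] at h1
  simp at h1 ⊢
  omega

/-- Extending a head `f` means mapping class `2` bijectively to the `n` vertices of `{1, 2, 3}`
outside the range of `f`, and class `5` likewise to those of `{4, 5, 0}`, with no other constraint. -/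
lemma Model.card_extensions {n : ℕ} {f : Fin 4 → Model n} (hf : Model.IsHead f) :
    #{σ ∈ cycleFactors (Model.Rel (n := n)) | (fun s => σ (Sum.inl s)) = f} =
      n.factorial ^ 2 := by
  classical
  obtain ⟨hR, hinj, h2⟩ := hf
  -- `g` is the colouring of the targets: `f s` receives the colour of `s`, and every other vertex
  -- the colour of the large class that has to cover it.
  let g : Model n → Fin 4 ⊕ Bool := fun w =>
    if h : ∃ s, f s = w then Sum.inl h.choose else Sum.inr w.side
  have gl : ∀ w s, g w = Sum.inl s ↔ w = f s := by
    intro w s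
    by_cases h : ∃ s, f s = w
    · simp only [g, dif_pos h, Sum.inl.injEq]
      have := h.choose_spec
      constructor
      · rintro rfl; exact this.symm
      · rintro rfl; exact hinj this
    · simp only [g, dif_neg h, reduceCtorEq, false_iff]
      exact fun h' => h ⟨s, h'.symm⟩
  have gr : ∀ w b, g w = Sum.inr b ↔ (¬ ∃ s, f s = w) ∧ w.side = b := by
    intro w b
    by_cases h : ∃ s, f s = w
    · simp [g, dif_pos h, h]
    · simp [g, dif_neg h, h]
  have hcount : ∀ b, #{s | (f s).side = b} = 2 := by
    rintro (_ | _)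
    · have := Finset.card_filter_add_card_filter_not (s := (univ : Finset (Fin 4)))
        (fun s => (f s).side = true)
      simp only [Bool.not_eq_true, h2, card_univ, Fintype.card_fin] at this
      omega
    · exact h2
  have hcol : ∀ k, #{v : Model n | v.color = k} = #{v | g v = k} := by
    rintro (s | b)
    · rw [Model.card_color_inl]
      simp only [gl, Finset.filter_eq', mem_univ, if_true, card_singleton]
    · rw [Model.card_color_inr]
      have h3 := Finset.card_filter_add_card_filter_not
        (s := ({w : Model n | w.side = b} : Finset _)) (fun w => ∃ s, f s = w)
      have h4 : #{w ∈ ({w : Model n | w.side = b} : Finset _) | ∃ s, f s = w} = 2 := by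
        rw [← hcount b, ← Finset.card_image_of_injective _ hinj]
        congr 1
        ext w
        simp only [mem_filter, mem_univ, true_and, mem_image]
        constructor
        · rintro ⟨h, s, rfl⟩; exact ⟨s, h, rfl⟩
        · rintro ⟨s, h, rfl⟩; exact ⟨h, s, rfl⟩
      rw [h4, Model.card_side, Finset.filter_filter] at h3
      simp only [gr]
      simp only [and_comm] at h3 ⊢
      omega
  have key := card_colored_perms Model.color g hcol
  have hprod : ∏ k, (#{v : Model n | v.color = k}).factorial = n.factorial ^ 2 := by
    simp [Fintype.prod_sum_type, Model.card_color_inl, Model.card_color_inr, sq]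
  rw [← hprod, ← key]
  congr 1
  ext σ
  simp only [cycleFactors, mem_filter, mem_univ, true_and, funext_iff]
  constructor
  · rintro ⟨h, hs⟩ v
    rcases v with s | i | i
    · exact (gl _ _).2 (hs s)
    all_goals
      refine (gr _ _).2 ⟨?_, ?_⟩
      · rintro ⟨s, h'⟩
        rw [← hs s] at h'
        simpa using σ.injective h'
    · exact (Model.rel_B i _).1 (h _)
    · exact (Model.rel_C i _).1 (h _)
  · intro h
    have hs : ∀ s, σ (Sum.inl s) = f s := fun s => (gl _ _).1 (h (Sum.inl s))
    refine ⟨?_, hs⟩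
    rintro (s | i | i)
    · rw [hs]; exact hR s
    · exact (Model.rel_B i _).2 ((gr _ _).1 (h (Sum.inr (Sum.inl i)))).2
    · exact (Model.rel_C i _).2 ((gr _ _).1 (h (Sum.inr (Sum.inr i)))).2

/-! ### Counting the restrictions -/

/-- Functions on `Fin 4` as quadruples. -/
def Model.quadEquiv (W : Type*) : (Fin 4 → W) ≃ W × W × W × W where
  toFun f := (f 0, f 1, f 2, f 3)
  invFun p := ![p.1, p.2.1, p.2.2.1, p.2.2.2]
  left_inv f := by ext i; fin_cases i <;> rfl
  right_inv p := rfl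

lemma Model.sum_rel_zero {n : ℕ} (F : Model n → ℤ) :
    (∑ w, if Model.Rel (Sum.inl 0) w then F w else 0) =
      F (Sum.inl 0) + F (Sum.inl 1) + ∑ i, F (Sum.inr (Sum.inr i)) := by
  simp +decide [Fintype.sum_sum_type, Fin.sum_univ_four, Model.Rel, Model.cls]

lemma Model.sum_rel_one {n : ℕ} (F : Model n → ℤ) :
    (∑ w, if Model.Rel (Sum.inl 1) w then F w else 0) =
      F (Sum.inl 0) + F (Sum.inl 1) + ∑ i, F (Sum.inr (Sum.inl i)) := by
  simp +decide [Fintype.sum_sum_type, Fin.sum_univ_four, Model.Rel, Model.cls]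

lemma Model.sum_rel_two {n : ℕ} (F : Model n → ℤ) :
    (∑ w, if Model.Rel (Sum.inl 2) w then F w else 0) =
      F (Sum.inl 2) + F (Sum.inl 3) + ∑ i, F (Sum.inr (Sum.inl i)) := by
  simp +decide [Fintype.sum_sum_type, Fin.sum_univ_four, Model.Rel, Model.cls]

lemma Model.sum_rel_three {n : ℕ} (F : Model n → ℤ) :
    (∑ w, if Model.Rel (Sum.inl 3) w then F w else 0) =
      F (Sum.inl 2) + F (Sum.inl 3) + ∑ i, F (Sum.inr (Sum.inr i)) := by
  simp +decide [Fintype.sum_sum_type, Fin.sum_univ_four, Model.Rel, Model.cls]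

lemma Model.isHead_quad {n : ℕ} (a b c e : Model n) :
    Model.IsHead ((Model.quadEquiv (Model n)).symm (a, b, c, e)) ↔
      Model.Rel (Sum.inl 0) a ∧ Model.Rel (Sum.inl 1) b ∧ Model.Rel (Sum.inl 2) c ∧
      Model.Rel (Sum.inl 3) e ∧ (a ≠ b ∧ a ≠ c ∧ a ≠ e ∧ b ≠ c ∧ b ≠ e ∧ c ≠ e) ∧
        a.side.toNat + b.side.toNat + c.side.toNat + e.side.toNat = 2 := by
  have h1 : ∀ b : Bool, (if b = true then 1 else 0) = b.toNat := by decide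
  change Model.IsHead ![a, b, c, e] ↔ _
  simp only [Model.IsHead, Function.Injective, Finset.card_filter, Fin.sum_univ_four,
    Fin.forall_fin_succ, h1]
  simp
  clear h1
  grind

/-- The number of heads, obtained by summing over the out-neighbours of the four singletons. It is
stated in `ℤ` because pairs of distinct elements of `Fin n` are counted by subtraction. -/
lemma Model.card_heads (n : ℕ) :
    (#{f : Fin 4 → Model n | Model.IsHead f} : ℤ) =
      ((n : ℤ) ^ 2 + n + 1) ^ 2 + 2 * (n + 1) ^ 2 + 2 * n ^ 2 + 1 := by
  rw [Finset.card_filter, ← (Model.quadEquiv (Model n)).symm.sum_comp]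
  push_cast
  simp only [Fintype.sum_prod_type, Model.isHead_quad, ite_and _ _ (1 : ℤ)]
  simp only [Finset.sum_ite_irrel, Finset.sum_const_zero, Model.sum_rel_zero,
    Model.sum_rel_one, Model.sum_rel_two, Model.sum_rel_three]
  have hne (c : ℤ) (x : Fin n) : (∑ y, if x = y then 0 else c) = n * c - c := by
    have h : ∀ y, (if x = y then 0 else c) = c - if x = y then c else 0 := fun y => by
      split_ifs <;> simp
    simp [h]
  have hcard (x y z : Fin n) : (#{w | ¬x = w ∧ ¬y = z} : ℤ) = if y = z then 0 else (n : ℤ) - 1 := by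
    rw [Finset.card_filter]
    push_cast
    by_cases h : y = z <;> simp only [h, not_true, not_false_eq_true, and_false, and_true,
      if_true, if_false, ite_not, hne, sum_const_zero, mul_one]
  simp [Model.side, hcard, hne, Finset.sum_add_distrib]
  ring

lemma Model.card_cycleFactors (n : ℕ) :
    #(cycleFactors (Model.Rel (n := n))) =
      n.factorial ^ 2 * ((n ^ 2 + n + 1) ^ 2 + 2 * (n + 1) ^ 2 + 2 * n ^ 2 + 1) := by
  rw [Finset.card_eq_sum_card_fiberwise (f := fun σ s => σ (Sum.inl s))
    (t := ({f | Model.IsHead f} : Finset (Fin 4 → Model n)))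
    (fun σ hσ => by simpa using Model.isHead_of_mem hσ)]
  rw [Finset.sum_congr rfl fun f hf => Model.card_extensions (by simpa using hf)]
  rw [Finset.sum_const, smul_eq_mul, mul_comm]
  congr 1
  have := Model.card_heads n
  exact_mod_cast this

/-! ### Transfer to the original vertex type -/

lemma card_filter_cls (d : ℕ) (p : ZMod 6 → Prop) [DecidablePred p] :
    #{v : XdVert d | p v.1} = ∑ i, if p i then XdSize d i else 0 := by
  rw [Finset.card_filter, Fintype.sum_sigma]
  refine Finset.sum_congr rfl fun i _ => ?_
  by_cases h : p i <;> simp [h]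

lemma Model.card_cls (n : ℕ) (i : ZMod 6) :
    #{v : Model n | v.cls = i} = XdSize (n + 2) i := by
  rw [Finset.card_filter]
  simp only [Fintype.sum_sum_type, Model.cls, Sum.elim_inl, Sum.elim_inr, Fin.sum_univ_four]
  have hi : i = 0 ∨ i = 1 ∨ i = 2 ∨ i = 3 ∨ i = 4 ∨ i = 5 := by revert i; decide
  rcases hi with rfl | rfl | rfl | rfl | rfl | rfl <;> simp +decide [XdSize]

lemma card_cycleFactors_eq (n : ℕ) :
    #(cycleFactors (XdRel (n + 2))) = #(cycleFactors (Model.Rel (n := n))) := by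
  obtain ⟨e, he⟩ := exists_equiv_of_fiber_card (fun v : XdVert (n + 2) => v.1)
    (Model.cls (n := n)) fun i => by
      rw [card_filter_cls _ (· = i), Model.card_cls]; simp
  refine Finset.card_equiv e.permCongr fun σ => ?_
  simp only [cycleFactors, mem_filter, mem_univ, true_and]
  rw [← e.forall_congr_right]
  simp [Model.Rel, XdRel, he]

lemma sum_zmod_six (F : ZMod 6 → ℕ) : ∑ i, F i = F 0 + F 1 + F 2 + F 3 + F 4 + F 5 :=
  Fin.sum_univ_six F

lemma card_vert (n : ℕ) : Fintype.card (XdVert (n + 2)) = 2 * (n + 2) := by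
  rw [Fintype.card_sigma]
  simp only [Fintype.card_fin]
  rw [sum_zmod_six]
  simp +decide [XdSize]
  ring

lemma isRegular (n : ℕ) : IsRegularDigraph (XdRel (n + 2)) (n + 2) := by
  rintro ⟨i, x⟩
  constructor
  · refine (card_filter_cls _ fun j => j - i = -1 ∨ j - i = 0 ∨ j - i = 1).trans ?_
    clear x
    rw [sum_zmod_six]
    fin_cases i <;> simp +decide [XdSize] <;> ring
  · refine (card_filter_cls _ fun j => i - j = -1 ∨ i - j = 0 ∨ i - j = 1).trans ?_
    clear x
    rw [sum_zmod_six]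
    fin_cases i <;> simp +decide [XdSize] <;> ring

theorem stmt_12 (d : ℕ) (hd : 3 ≤ d) :
    Fintype.card (XdVert d) = 2 * d ∧ IsRegularDigraph (XdRel d) d ∧
      ((cycleFactors (XdRel d)).card : ℤ) =
        (Nat.factorial (d - 2) : ℤ) ^ 2 *
          ((d : ℤ) ^ 4 - 6 * d ^ 3 + 19 * d ^ 2 - 30 * d + 20) := by
  obtain ⟨n, rfl⟩ : ∃ n, d = n + 2 := ⟨d - 2, by omega⟩
  refine ⟨card_vert n, isRegular n, ?_⟩
  rw [card_cycleFactors_eq, Model.card_cycleFactors, Nat.add_sub_cancel]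
  push_cast
  ring
end
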